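/- arXiv:2102.04200 — 6 statements merged into one kernel-verified Lean document; each statement's English description precedes it below -/
import Mathlib

section
/- Let X be an integer-valued random variable with finite variance σ². If 1/3 < α < 1, then H_α(X) < (1/2) ln( (3α−1)/(1−α) · π(σ² + 1/12) ) + (1/(1−α)) ln( 2α/(3α−1) ) + ln( Γ(1/(1−α) − 1/2) / Γ(1/(1−α)) ). If α > 1, then H_α(X) < (1/2) ln( (3α−1)/(α−1) · π(σ² + 1/12) ) + (1/(α−1)) ln( (3α−1)/(2α) ) + ln( Γ(α/(α−1)) / Γ(α/(α−1) + 1/2) ). -/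
open MeasureTheory Real

/-!
Spreading the mass `p k` uniformly over `[k, k + 1)` gives the density `x ↦ p ⌊x⌋` of `X + U`, with
`U` uniform and independent of `X`. This keeps the sum of the `p k ^ α` and adds `1 / 12` to the
variance. Among densities of given variance the `q`-Gaussian `g` maximizes the Rényi entropy: the
Bregman divergence of `t ^ α / (α - 1)` from `f` to `g` is nonnegative, and since `g ^ (α - 1)` is a
quadratic (truncated if `α > 1`), its cross term is controlled by the mass and variance of `f`. A
density that is a positive constant on some interval is not a `q`-Gaussian, whence the strict
inequality. Beta integrals evaluate the entropy of `g`.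
-/

/-! ### Beta integrals -/

lemma integral_Ioo_rpow_mul_one_sub_rpow {u v : ℝ} (hu : 0 < u) (hv : 0 < v) :
    ∫ t in Set.Ioo (0 : ℝ) 1, t ^ (u - 1) * (1 - t) ^ (v - 1) = ProbabilityTheory.beta u v := by
  rw [ProbabilityTheory.beta_eq_betaIntegralReal u v hu hv, Complex.betaIntegral,
    intervalIntegral.integral_of_le zero_le_one, ← integral_Ioc_eq_integral_Ioo,
    ← RCLike.re_to_complex, ← integral_re]
  · refine setIntegral_congr_fun measurableSet_Ioc fun t ⟨ht0, ht1⟩ ↦ ?_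
    norm_cast
    rw [← Complex.ofReal_cpow ht0.le, ← Complex.ofReal_cpow (sub_nonneg.2 ht1),
      RCLike.re_to_complex, Complex.re_mul_ofReal, Complex.ofReal_re]
  · exact (intervalIntegrable_iff_integrableOn_Ioc_of_le zero_le_one).1
      (Complex.betaIntegral_convergent (by simpa using hu) (by simpa using hv))

lemma image_div_one_sub_Ioo : (fun t : ℝ ↦ t / (1 - t)) '' Set.Ioo 0 1 = Set.Ioi 0 := by
  ext y
  constructor
  · rintro ⟨t, ⟨ht0, ht1⟩, rfl⟩
    exact div_pos ht0 (sub_pos.2 ht1)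
  · intro (hy : 0 < y)
    refine ⟨y / (1 + y), ⟨by positivity, (div_lt_one (by positivity)).2 (by linarith)⟩, ?_⟩
    field_simp
    ring

lemma injOn_div_one_sub_Ioo : Set.InjOn (fun t : ℝ ↦ t / (1 - t)) (Set.Ioo 0 1) := by
  intro t ht r hr (htr : t / (1 - t) = r / (1 - r))
  rw [div_eq_div_iff (sub_pos.2 ht.2).ne' (sub_pos.2 hr.2).ne'] at htr
  linarith

lemma hasDerivAt_div_one_sub {t : ℝ} (ht : t ≠ 1) :
    HasDerivAt (fun t : ℝ ↦ t / (1 - t)) (1 / (1 - t) ^ 2) t := by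
  convert! (hasDerivAt_id t).div ((hasDerivAt_id t).const_sub 1) (sub_ne_zero.2 ht.symm) using 1
  simp

lemma integral_Ioi_rpow_mul_one_add_rpow_neg {u v : ℝ} (hu : 0 < u) (hv : 0 < v) :
    ∫ y in Set.Ioi (0 : ℝ), y ^ (u - 1) * (1 + y) ^ (-(u + v)) = ProbabilityTheory.beta u v := by
  rw [← integral_Ioo_rpow_mul_one_sub_rpow hu hv, ← image_div_one_sub_Ioo,
    integral_image_eq_integral_abs_deriv_smul measurableSet_Ioo
      (fun t ht ↦ (hasDerivAt_div_one_sub ht.2.ne).hasDerivWithinAt) injOn_div_one_sub_Ioo]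
  refine setIntegral_congr_fun measurableSet_Ioo fun t ⟨ht0, ht1⟩ ↦ ?_
  have ht : 0 < 1 - t := sub_pos.2 ht1
  have one_add : 1 + t / (1 - t) = (1 - t)⁻¹ := by field_simp; ring
  simp only [smul_eq_mul]
  rw [abs_of_pos (by positivity), one_add, inv_rpow ht.le, rpow_neg ht.le, inv_inv,
    div_rpow ht0.le ht.le, show u + v = (u - 1) + (v - 1) + (2 : ℕ) by push_cast; ring,
    rpow_add ht, rpow_add ht, rpow_natCast]
  field_simp

lemma integral_comp_sq (f : ℝ → ℝ) :
    ∫ x : ℝ, f (x ^ 2) = ∫ y in Set.Ioi (0 : ℝ), y ^ (1 / 2 - 1 : ℝ) * f y := by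
  have fold := integral_comp_abs (f := fun x ↦ f (x ^ 2))
  simp only [sq_abs] at fold
  rw [fold,
    ← integral_comp_rpow_Ioi_of_pos (g := fun y ↦ y ^ (1 / 2 - 1 : ℝ) * f y) two_pos,
    ← integral_const_mul]
  refine setIntegral_congr_fun measurableSet_Ioi fun x (hx : 0 < x) ↦ ?_
  simp only [smul_eq_mul]
  rw [← rpow_mul hx.le, show (2 : ℝ) * (1 / 2 - 1) = -1 by norm_num, rpow_neg_one,
    show (2 : ℝ) - 1 = 1 by norm_num, rpow_one, rpow_two]
  field_simp

lemma integral_one_add_sq_rpow_neg {c : ℝ} (hc : 1 / 2 < c) :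
    ∫ x : ℝ, (1 + x ^ 2) ^ (-c) = √π * (Gamma (c - 1 / 2) / Gamma c) := by
  rw [integral_comp_sq fun y ↦ (1 + y) ^ (-c)]
  have h := integral_Ioi_rpow_mul_one_add_rpow_neg one_half_pos (sub_pos.2 hc)
  rwa [ProbabilityTheory.beta, Gamma_one_half_eq, add_sub_cancel, mul_div_assoc] at h

lemma integral_max_one_sub_sq_rpow {b : ℝ} (hb : -1 < b) (hb0 : b ≠ 0) :
    ∫ x : ℝ, max (1 - x ^ 2) 0 ^ b = √π * (Gamma (b + 1) / Gamma (b + 3 / 2)) := by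
  have h := integral_Ioo_rpow_mul_one_sub_rpow one_half_pos (neg_lt_iff_pos_add.1 hb)
  rw [ProbabilityTheory.beta, Gamma_one_half_eq, mul_div_assoc,
    show 1 / 2 + (b + 1) = b + 3 / 2 by ring, add_sub_cancel_right] at h
  rw [integral_comp_sq fun y ↦ max (1 - y) 0 ^ b, ← h,
    setIntegral_eq_of_subset_of_forall_sdiff_eq_zero measurableSet_Ioi Set.Ioo_subset_Ioi_self]
  · refine setIntegral_congr_fun measurableSet_Ioo fun y hy ↦ ?_
    simp only [max_eq_left (sub_pos.2 hy.2).le]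
  · intro y ⟨hy0, hy1⟩
    have : 1 ≤ y := not_lt.1 fun h ↦ hy1 ⟨hy0, h⟩
    rw [max_eq_right (sub_nonpos.2 this), zero_rpow hb0, mul_zero]

lemma integral_comp_sub_div (f : ℝ → ℝ) (m : ℝ) {R : ℝ} (hR : 0 < R) :
    ∫ x, f ((x - m) / R) = R * ∫ x, f x := by
  rw [integral_sub_right_eq_self (fun x ↦ f (x / R)) m, Measure.integral_comp_div, abs_of_pos hR,
    smul_eq_mul]

/-! ### The Bregman divergence of a power -/

/-- The Bregman divergence of `t ↦ t ^ α / (α - 1)`, with the terms in `v ^ α` collected. The factor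
`1 / (α - 1)` makes the generator convex both for `α < 1` and for `α > 1`. -/
noncomputable def rpowBregman (α u v : ℝ) : ℝ :=
  (u ^ α - (1 - α) * v ^ α - α * (u * v ^ (α - 1))) / (α - 1)

lemma rpowBregman_eq_mul {α u v : ℝ} (hu : 0 ≤ u) (hv : 0 < v) :
    rpowBregman α u v = v ^ α * (((1 + (u / v - 1)) ^ α - (1 + α * (u / v - 1))) / (α - 1)) := by
  rw [rpowBregman, rpow_sub_one hv.ne', add_sub_cancel, div_rpow hu hv.le]
  field_simp
  ring

lemma rpowBregman_pos {α u v : ℝ} (hα0 : 0 < α) (hα1 : α ≠ 1) (hu : 0 ≤ u) (hv : 0 ≤ v)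
    (hv0 : α < 1 → 0 < v) (huv : u ≠ v) : 0 < rpowBregman α u v := by
  rcases hv.eq_or_lt with rfl | hv
  · have hα : 1 < α := hα1.lt_or_gt.resolve_left fun h ↦ (hv0 h).false
    have : 0 < u := hu.lt_of_ne huv.symm
    have hα' := sub_pos.2 hα
    rw [rpowBregman, zero_rpow hα0.ne', zero_rpow hα'.ne', mul_zero, mul_zero, mul_zero, sub_zero,
      sub_zero]
    positivity
  · have ht : -1 ≤ u / v - 1 := by linarith [div_nonneg hu hv.le]
    have ht0 : u / v - 1 ≠ 0 := by rwa [sub_ne_zero, Ne, div_eq_one_iff_eq hv.ne']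
    rw [rpowBregman_eq_mul hu hv]
    refine mul_pos (rpow_pos_of_pos hv α) ?_
    rcases hα1.lt_or_gt with hα | hα
    · exact div_pos_of_neg_of_neg
        (sub_neg.2 (rpow_one_add_lt_one_add_mul_self ht ht0 hα0 hα)) (sub_neg.2 hα)
    · exact div_pos (sub_pos.2 (one_add_mul_self_lt_rpow_one_add ht ht0 hα)) (sub_pos.2 hα)

lemma rpowBregman_nonneg {α u v : ℝ} (hα0 : 0 < α) (hα1 : α ≠ 1) (hu : 0 ≤ u) (hv : 0 ≤ v)
    (hv0 : α < 1 → 0 < v) : 0 ≤ rpowBregman α u v := by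
  rcases eq_or_ne u v with rfl | huv
  · have : u * u ^ (α - 1) = u ^ α := by
      rw [mul_comm, ← rpow_add_one' hu (by simpa using hα0.ne'), sub_add_cancel]
    rw [rpowBregman, this, show u ^ α - (1 - α) * u ^ α - α * u ^ α = 0 by ring, zero_div]
  · exact (rpowBregman_pos hα0 hα1 hu hv hv0 huv).le

section Comparison

variable {X : Type*} [MeasurableSpace X] {ν : Measure X} {α : ℝ} {f g : X → ℝ}

lemma integrable_rpow_of_lt_one (hα0 : 0 < α) (hα1 : α < 1) (hf : AEStronglyMeasurable f ν)
    (hf0 : ∀ x, 0 ≤ f x) (hg0 : ∀ x, 0 < g x) (hgα : Integrable (fun x ↦ g x ^ α) ν)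
    (hfg : Integrable (fun x ↦ f x * g x ^ (α - 1)) ν) : Integrable (fun x ↦ f x ^ α) ν := by
  refine ((hgα.const_mul (1 - α)).add (hfg.const_mul α)).mono'
    (hf.aemeasurable.pow_const α).aestronglyMeasurable (.of_forall fun x ↦ ?_)
  have h := rpowBregman_nonneg hα0 hα1.ne (hf0 x) (hg0 x).le fun _ ↦ hg0 x
  rw [rpowBregman, le_div_iff_of_neg (sub_neg.2 hα1)] at h
  rw [norm_of_nonneg (rpow_nonneg (hf0 x) α)]
  simp only [Pi.add_apply]
  linarith

/-- A Gibbs inequality. Letting `w` differ from `g ^ (α - 1)` in one direction covers a truncated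
`g`: the integral of `f` against the untruncated `w` is explicit, and the error has the right
sign. -/
lemma integral_rpow_div_lt {w : X → ℝ} (hα0 : 0 < α) (hα1 : α ≠ 1)
    (hf0 : ∀ x, 0 ≤ f x) (hg0 : ∀ x, 0 ≤ g x) (hg_pos : α < 1 → ∀ x, 0 < g x)
    (hw : ∀ x, w x / (α - 1) ≤ g x ^ (α - 1) / (α - 1))
    (hfα : Integrable (fun x ↦ f x ^ α) ν) (hgα : Integrable (fun x ↦ g x ^ α) ν)
    (hfw : Integrable (fun x ↦ f x * w x) ν) (h_cross : ∫ x, f x * w x ∂ν = ∫ x, g x ^ α ∂ν)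
    (hne : ¬ f =ᵐ[ν] g) :
    (∫ x, g x ^ α ∂ν) / (α - 1) < (∫ x, f x ^ α ∂ν) / (α - 1) := by
  set D : X → ℝ := fun x ↦ (f x ^ α - (1 - α) * g x ^ α - α * (f x * w x)) / (α - 1) with hD
  have breg_le x : rpowBregman α (f x) (g x) ≤ D x := by
    have : α * (f x * w x) / (α - 1) ≤ α * (f x * g x ^ (α - 1)) / (α - 1) := by
      simpa only [mul_div_assoc, mul_assoc] using
        mul_le_mul_of_nonneg_left (hw x) (mul_nonneg hα0.le (hf0 x))
    simp only [hD, rpowBregman, sub_div]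
    linarith
  have hD_int : Integrable D ν := ((hfα.sub (hgα.const_mul _)).sub (hfw.const_mul _)).div_const _
  have hD0 : 0 ≤ D := fun x ↦
    (rpowBregman_nonneg hα0 hα1 (hf0 x) (hg0 x) fun h ↦ hg_pos h x).trans (breg_le x)
  have integral_D : ∫ x, D x ∂ν = ((∫ x, f x ^ α ∂ν) - ∫ x, g x ^ α ∂ν) / (α - 1) := by
    rw [integral_div, integral_sub (by exact hfα.sub (hgα.const_mul _)) (hfw.const_mul _),
      integral_sub hfα (hgα.const_mul _), integral_const_mul, integral_const_mul, h_cross]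
    ring
  have : 0 < ∫ x, D x ∂ν := by
    refine (integral_nonneg hD0).lt_of_ne' fun h ↦ hne ?_
    filter_upwards [(integral_eq_zero_iff_of_nonneg hD0 hD_int).1 h] with x hx
    by_contra hfg
    exact ((rpowBregman_pos hα0 hα1 (hf0 x) (hg0 x) (fun h ↦ hg_pos h x) hfg).trans_le
      (breg_le x)).ne' hx
  rw [integral_D, sub_div] at this
  exact sub_pos.1 this

lemma integral_rpow_pos (hα : 0 < α) (hf0 : ∀ x, 0 ≤ f x) (hfα : Integrable (fun x ↦ f x ^ α) ν)
    (hf : ∫ x, f x ∂ν ≠ 0) :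
    0 < ∫ x, f x ^ α ∂ν := by
  have hfα0 : 0 ≤ fun x ↦ f x ^ α := fun x ↦ rpow_nonneg (hf0 x) α
  refine (integral_nonneg hfα0).lt_of_ne' fun h ↦ hf (integral_eq_zero_of_ae ?_)
  filter_upwards [(integral_eq_zero_iff_of_nonneg hfα0 hfα).1 h] with x hx
  exact (rpow_eq_zero (hf0 x) hα.ne').1 hx

end Comparison

/-! ### The `q`-Gaussian density -/

/-- The quadratic whose power `1 / (α - 1)` is the `q`-Gaussian profile with centre `m` and variance
`s`. Truncation at `0` matters only for `α > 1`, where the profile has compact support. -/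
noncomputable def qGaussianBase (α s m x : ℝ) : ℝ :=
  max (1 + (1 - α) / (3 * α - 1) * ((x - m) ^ 2 / s)) 0

/-- The normalizing constant of the `q`-Gaussian profile. -/
noncomputable def qGaussianMass (α s m : ℝ) : ℝ :=
  ∫ x, qGaussianBase α s m x ^ (1 / (α - 1))

/-- The `q`-Gaussian density with centre `m` and variance `s`, which maximizes the Rényi entropy of
order `α` under a variance constraint; in the usual parametrization `q = 2 - α`. -/
noncomputable def qGaussian (α s m x : ℝ) : ℝ :=
  qGaussianBase α s m x ^ (1 / (α - 1)) / qGaussianMass α s m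

lemma log_sqrt_mul_sqrt_pi_mul {D s G : ℝ} (hD : 0 < D) (hs : 0 < s) (hG : 0 < G) :
    log (√(D * s) * (√π * G)) = 1 / 2 * log (D * (π * s)) + log G := by
  rw [← mul_assoc, ← sqrt_mul (by positivity), log_mul (by positivity) hG.ne',
    log_sqrt (by positivity), show D * s * π = D * (π * s) by ring]
  ring

section QGaussian

variable {α s : ℝ} (m : ℝ)

lemma qGaussianBase_nonneg (x : ℝ) : 0 ≤ qGaussianBase α s m x := le_max_right _ _

lemma qGaussianMass_nonneg : 0 ≤ qGaussianMass α s m :=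
  integral_nonneg fun x ↦ rpow_nonneg (qGaussianBase_nonneg m x) _

lemma qGaussianBase_of_lt_one (hα : 1 / 3 < α) (hα1 : α < 1) (hs : 0 < s) (x : ℝ) :
    qGaussianBase α s m x = 1 + ((x - m) / √((3 * α - 1) / (1 - α) * s)) ^ 2 := by
  have : 0 < 1 - α := sub_pos.2 hα1
  have h3 : 0 < 3 * α - 1 := by linarith
  rw [qGaussianBase, max_eq_left (by positivity), div_pow, sq_sqrt (by positivity)]
  field_simp

lemma qGaussianBase_of_one_lt (hα1 : 1 < α) (hs : 0 < s) (x : ℝ) :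
    qGaussianBase α s m x = max (1 - ((x - m) / √((3 * α - 1) / (α - 1) * s)) ^ 2) 0 := by
  have : 0 < α - 1 := sub_pos.2 hα1
  have h3 : 0 < 3 * α - 1 := by linarith
  rw [qGaussianBase, div_pow, sq_sqrt (by positivity)]
  congr 1
  field_simp
  ring

lemma integral_qGaussianBase_rpow_neg (hα : 1 / 3 < α) (hα1 : α < 1) (hs : 0 < s) {c : ℝ}
    (hc : 1 / 2 < c) :
    ∫ x, qGaussianBase α s m x ^ (-c) =
      √((3 * α - 1) / (1 - α) * s) * (√π * (Gamma (c - 1 / 2) / Gamma c)) := by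
  have : 0 < 1 - α := sub_pos.2 hα1
  have h3 : 0 < 3 * α - 1 := by linarith
  simp_rw [qGaussianBase_of_lt_one m hα hα1 hs]
  rw [integral_comp_sub_div (fun x ↦ (1 + x ^ 2) ^ (-c)) m (by positivity),
    integral_one_add_sq_rpow_neg hc]

lemma integral_qGaussianBase_rpow (hα1 : 1 < α) (hs : 0 < s) {b : ℝ} (hb : -1 < b) (hb0 : b ≠ 0) :
    ∫ x, qGaussianBase α s m x ^ b =
      √((3 * α - 1) / (α - 1) * s) * (√π * (Gamma (b + 1) / Gamma (b + 3 / 2))) := by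
  have : 0 < α - 1 := sub_pos.2 hα1
  have h3 : 0 < 3 * α - 1 := by linarith
  simp_rw [qGaussianBase_of_one_lt m hα1 hs]
  rw [integral_comp_sub_div (fun x ↦ max (1 - x ^ 2) 0 ^ b) m (by positivity),
    integral_max_one_sub_sq_rpow hb hb0]

lemma qGaussianMass_of_lt_one (hα : 1 / 3 < α) (hα1 : α < 1) (hs : 0 < s) :
    qGaussianMass α s m = √((3 * α - 1) / (1 - α) * s) *
      (√π * (Gamma (1 / (1 - α) - 1 / 2) / Gamma (1 / (1 - α)))) := by
  have hc : 1 / 2 < 1 / (1 - α) := by rw [lt_div_iff₀ (sub_pos.2 hα1)]; linarith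
  rw [qGaussianMass, ← integral_qGaussianBase_rpow_neg m hα hα1 hs hc, ← neg_sub 1 α, div_neg]

lemma qGaussianMass_of_one_lt (hα1 : 1 < α) (hs : 0 < s) :
    qGaussianMass α s m = √((3 * α - 1) / (α - 1) * s) *
      (√π * (Gamma (α / (α - 1)) / Gamma (α / (α - 1) + 1 / 2))) := by
  have h1 : 0 < α - 1 := sub_pos.2 hα1
  have hb : 0 < 1 / (α - 1) := by positivity
  have hb1 : 1 / (α - 1) + 1 = α / (α - 1) := by field_simp; ring
  rw [qGaussianMass, integral_qGaussianBase_rpow m hα1 hs (by linarith) hb.ne', ← hb1]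
  norm_num [add_assoc]

lemma log_qGaussianMass_of_lt_one (hα : 1 / 3 < α) (hα1 : α < 1) (hs : 0 < s) :
    log (qGaussianMass α s m) = 1 / 2 * log ((3 * α - 1) / (1 - α) * (π * s)) +
      log (Gamma (1 / (1 - α) - 1 / 2) / Gamma (1 / (1 - α))) := by
  have hc : 1 / 2 < 1 / (1 - α) := by rw [lt_div_iff₀ (sub_pos.2 hα1)]; linarith
  rw [qGaussianMass_of_lt_one m hα hα1 hs]
  exact log_sqrt_mul_sqrt_pi_mul (div_pos (by linarith) (sub_pos.2 hα1)) hs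
    (div_pos (Gamma_pos_of_pos (sub_pos.2 hc)) (Gamma_pos_of_pos (by linarith)))

lemma log_qGaussianMass_of_one_lt (hα1 : 1 < α) (hs : 0 < s) :
    log (qGaussianMass α s m) = 1 / 2 * log ((3 * α - 1) / (α - 1) * (π * s)) +
      log (Gamma (α / (α - 1)) / Gamma (α / (α - 1) + 1 / 2)) := by
  have h1 : 0 < α - 1 := sub_pos.2 hα1
  rw [qGaussianMass_of_one_lt m hα1 hs]
  exact log_sqrt_mul_sqrt_pi_mul (div_pos (by linarith) h1) hs (by positivity)

lemma qGaussianMass_pos (hα : 1 / 3 < α) (hα1 : α ≠ 1) (hs : 0 < s) : 0 < qGaussianMass α s m := by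
  have h3 : 0 < 3 * α - 1 := by linarith
  rcases hα1.lt_or_gt with hα1 | hα1
  · have : 0 < 1 - α := sub_pos.2 hα1
    have hc : 1 / 2 < 1 / (1 - α) := by rw [lt_div_iff₀ (sub_pos.2 hα1)]; linarith
    have := Gamma_pos_of_pos (sub_pos.2 hc)
    rw [qGaussianMass_of_lt_one m hα hα1 hs]
    positivity
  · have : 0 < α - 1 := sub_pos.2 hα1
    rw [qGaussianMass_of_one_lt m hα1 hs]
    positivity

lemma Gamma_add_one_div_Gamma_add_one {a b : ℝ} (ha : a ≠ 0) (hb : b ≠ 0) :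
    Gamma (a + 1) / Gamma (b + 1) = a / b * (Gamma a / Gamma b) := by
  rw [Gamma_add_one ha, Gamma_add_one hb, mul_div_mul_comm]

lemma integral_qGaussianBase_rpow_div (hα : 1 / 3 < α) (hα1 : α ≠ 1) (hs : 0 < s) :
    ∫ x, qGaussianBase α s m x ^ (α / (α - 1)) = 2 * α / (3 * α - 1) * qGaussianMass α s m := by
  have h3 : 0 < 3 * α - 1 := by linarith
  rcases hα1.lt_or_gt with hα1 | hα1
  · have h1 : 0 < 1 - α := sub_pos.2 hα1
    have hc : 1 / 2 < α / (1 - α) := by rw [lt_div_iff₀ h1]; linarith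
    have h_ratio : (α / (1 - α) - 1 / 2) / (α / (1 - α)) = (3 * α - 1) / (2 * α) := by
      rw [show α / (1 - α) - 1 / 2 = (3 * α - 1) / (2 * (1 - α)) by field_simp; ring]
      field_simp
    rw [← neg_sub 1 α, div_neg, integral_qGaussianBase_rpow_neg m hα hα1 hs hc,
      qGaussianMass_of_lt_one m hα hα1 hs, show 1 / (1 - α) = α / (1 - α) + 1 by field_simp; ring,
      add_sub_right_comm, Gamma_add_one_div_Gamma_add_one (by linarith) (by linarith), h_ratio]
    field_simp
  · have : 0 < α - 1 := sub_pos.2 hα1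
    have hb : 0 < α / (α - 1) := by positivity
    have h_ratio : α / (α - 1) / (α / (α - 1) + 1 / 2) = 2 * α / (3 * α - 1) := by
      rw [show α / (α - 1) + 1 / 2 = (3 * α - 1) / (2 * (α - 1)) by field_simp; ring]
      field_simp
    rw [integral_qGaussianBase_rpow m hα1 hs (by linarith) hb.ne', qGaussianMass_of_one_lt m hα1 hs,
      show α / (α - 1) + 3 / 2 = α / (α - 1) + 1 / 2 + 1 by ring,
      Gamma_add_one_div_Gamma_add_one hb.ne' (by positivity), h_ratio]
    ring

lemma qGaussian_nonneg (x : ℝ) : 0 ≤ qGaussian α s m x :=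
  div_nonneg (rpow_nonneg (qGaussianBase_nonneg m x) _) (qGaussianMass_nonneg m)

lemma qGaussian_pos_of_lt_one (hα : 1 / 3 < α) (hα1 : α < 1) (hs : 0 < s) (x : ℝ) :
    0 < qGaussian α s m x := by
  have := qGaussianMass_pos m hα hα1.ne hs
  rw [qGaussian, qGaussianBase_of_lt_one m hα hα1 hs]
  positivity

lemma qGaussian_rpow (r x : ℝ) :
    qGaussian α s m x ^ r =
      qGaussianBase α s m x ^ (r / (α - 1)) * qGaussianMass α s m ^ (-r) := by
  have h_base : 0 ≤ qGaussianBase α s m x := qGaussianBase_nonneg m x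
  rw [qGaussian, div_rpow (rpow_nonneg h_base _) (qGaussianMass_nonneg m), ← rpow_mul h_base,
    one_div_mul_eq_div, rpow_neg (qGaussianMass_nonneg m), div_eq_mul_inv]

lemma integral_qGaussian_rpow (hα : 1 / 3 < α) (hα1 : α ≠ 1) (hs : 0 < s) :
    ∫ x, qGaussian α s m x ^ α = 2 * α / (3 * α - 1) * qGaussianMass α s m ^ (1 - α) := by
  simp_rw [qGaussian_rpow m]
  rw [integral_mul_const, integral_qGaussianBase_rpow_div m hα hα1 hs, sub_eq_add_neg 1 α,
    rpow_add (qGaussianMass_pos m hα hα1 hs), rpow_one, mul_assoc]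

lemma integral_qGaussian_rpow_pos (hα : 1 / 3 < α) (hα1 : α ≠ 1) (hs : 0 < s) :
    0 < ∫ x, qGaussian α s m x ^ α := by
  have h3 : 0 < 3 * α - 1 := by linarith
  have := qGaussianMass_pos m hα hα1 hs
  rw [integral_qGaussian_rpow m hα hα1 hs]
  positivity

lemma log_integral_qGaussian_rpow (hα : 1 / 3 < α) (hα1 : α ≠ 1) (hs : 0 < s) :
    1 / (1 - α) * log (∫ x, qGaussian α s m x ^ α) =
      log (qGaussianMass α s m) + 1 / (1 - α) * log (2 * α / (3 * α - 1)) := by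
  have h1 : 1 - α ≠ 0 := sub_ne_zero.2 hα1.symm
  have hκ : 0 < 2 * α / (3 * α - 1) := div_pos (by linarith) (by linarith)
  have hM := qGaussianMass_pos m hα hα1 hs
  rw [integral_qGaussian_rpow m hα hα1 hs, log_mul hκ.ne' (by positivity), log_rpow hM]
  field_simp
  ring

lemma qGaussian_rpow_sub_one (hα1 : α ≠ 1) (x : ℝ) :
    qGaussian α s m x ^ (α - 1) = qGaussianBase α s m x * qGaussianMass α s m ^ (1 - α) := by
  rw [qGaussian_rpow, div_self (sub_ne_zero.2 hα1), rpow_one, neg_sub]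

lemma quadratic_div_le_qGaussianBase_div (hα : 1 / 3 < α) (hα1 : α ≠ 1) (hs : 0 < s) (x : ℝ) :
    (1 + (1 - α) / (3 * α - 1) * ((x - m) ^ 2 / s)) / (α - 1) ≤
      qGaussianBase α s m x / (α - 1) := by
  rcases hα1.lt_or_gt with hα1 | hα1
  · have : 0 < 1 - α := sub_pos.2 hα1
    have h3 : 0 < 3 * α - 1 := by linarith
    rw [qGaussianBase, max_eq_left (by positivity)]
  · exact div_le_div_of_nonneg_right (le_max_left _ _) (sub_pos.2 hα1).le

end QGaussian

/-! ### Maximum entropy under a variance constraint -/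

section MaxEntropy

variable {α s m : ℝ} {f : ℝ → ℝ}

lemma integrable_qGaussian_rpow (hα : 1 / 3 < α) (hα1 : α ≠ 1) (hs : 0 < s) :
    Integrable fun x ↦ qGaussian α s m x ^ α :=
  .of_integral_ne_zero (integral_qGaussian_rpow_pos m hα hα1 hs).ne'

lemma integrable_rpow_of_integrable_sq_mul (hα : 1 / 3 < α) (hα1 : α < 1) (hf0 : ∀ x, 0 ≤ f x)
    (hf : Integrable f) (hfm : Integrable fun x ↦ (x - m) ^ 2 * f x) :
    Integrable fun x ↦ f x ^ α := by
  have : 0 < 1 - α := sub_pos.2 hα1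
  have h3 : 0 < 3 * α - 1 := by linarith
  refine integrable_rpow_of_lt_one (by linarith) hα1 hf.aestronglyMeasurable hf0
    (qGaussian_pos_of_lt_one m hα hα1 one_pos)
    (integrable_qGaussian_rpow hα hα1.ne one_pos) ?_
  simp_rw [qGaussian_rpow_sub_one m hα1.ne, qGaussianBase]
  refine ((hf.add (hfm.const_mul ((1 - α) / (3 * α - 1)))).mul_const
    (qGaussianMass α 1 m ^ (1 - α))).congr (.of_forall fun x ↦ ?_)
  simp only [Pi.add_apply]
  rw [max_eq_left (by positivity)]
  ring

lemma integral_qGaussian_rpow_div_lt (hα : 1 / 3 < α) (hα1 : α ≠ 1) (hs : 0 < s)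
    (hf0 : ∀ x, 0 ≤ f x) (hf : Integrable f) (hf1 : ∫ x, f x = 1)
    (hfm : Integrable fun x ↦ (x - m) ^ 2 * f x) (hfs : ∫ x, (x - m) ^ 2 * f x = s)
    (hfα : Integrable fun x ↦ f x ^ α) (hne : ¬ f =ᵐ[volume] qGaussian α s m) :
    (∫ x, qGaussian α s m x ^ α) / (α - 1) < (∫ x, f x ^ α) / (α - 1) := by
  have h_one_add : 2 * α / (3 * α - 1) = 1 + (1 - α) / (3 * α - 1) := by
    rw [one_add_div (by linarith)]
    ring
  set A := (1 - α) / (3 * α - 1)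
  set K := qGaussianMass α s m ^ (1 - α) with hK
  have hK0 : 0 ≤ K := rpow_nonneg (qGaussianMass_pos m hα hα1 hs).le _
  have h_expand (x : ℝ) :
      f x * ((1 + A * ((x - m) ^ 2 / s)) * K) = K * f x + K * A / s * ((x - m) ^ 2 * f x) := by
    ring
  refine integral_rpow_div_lt (w := fun x ↦ (1 + A * ((x - m) ^ 2 / s)) * K) (by linarith) hα1 hf0
    (qGaussian_nonneg m) (fun hα1 ↦ qGaussian_pos_of_lt_one m hα hα1 hs) (fun x ↦ ?_) hfα
    (integrable_qGaussian_rpow hα hα1 hs) ?_ ?_ hne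
  · simpa only [qGaussian_rpow_sub_one m hα1, mul_div_right_comm] using
      mul_le_mul_of_nonneg_right (quadratic_div_le_qGaussianBase_div m hα hα1 hs x) hK0
  · simp_rw [h_expand]
    exact (hf.const_mul K).add (hfm.const_mul (K * A / s))
  · simp_rw [h_expand]
    rw [integral_add (hf.const_mul _) (hfm.const_mul _), integral_const_mul, integral_const_mul,
      hf1, hfs, integral_qGaussian_rpow m hα hα1 hs, ← hK, h_one_add]
    field_simp

lemma not_ae_eq_qGaussian_of_eqOn_Ioo (hα : 1 / 3 < α) (hα1 : α ≠ 1) (hs : 0 < s) {a b c : ℝ}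
    (hab : a < b) (hc : 0 < c) (hf : Set.EqOn f (fun _ ↦ c) (Set.Ioo a b)) :
    ¬ f =ᵐ[volume] qGaussian α s m := by
  intro hfg
  set K := qGaussianMass α s m ^ (1 - α) with hK
  have hK0 : 0 < K := rpow_pos_of_pos (qGaussianMass_pos m hα hα1 hs) _
  set C := c ^ (α - 1) / K
  have hC : 0 < C := by positivity
  have h_base : Set.EqOn (qGaussianBase α s m) (fun _ ↦ C) (Set.Ioo a b) := by
    refine Measure.eqOn_open_of_ae_eq (μ := volume) ?_ isOpen_Ioo
      (by unfold qGaussianBase; fun_prop) continuousOn_const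
    filter_upwards [ae_restrict_of_ae hfg, ae_restrict_mem measurableSet_Ioo] with x hx hx_mem
    rw [eq_div_iff hK0.ne', hK, ← qGaussian_rpow_sub_one m hα1, ← hx, hf hx_mem]
  have h_quad {x : ℝ} (hx : x ∈ Set.Ioo a b) :
      1 + (1 - α) / (3 * α - 1) * ((x - m) ^ 2 / s) = C := by
    have hx_base : max _ 0 = C := h_base hx
    exact (max_eq_iff.1 hx_base).elim (·.1) fun h ↦ absurd h.1 hC.ne
  -- The second difference of a quadratic that is constant on `(a, b)` vanishes.
  have h_left := h_quad (x := a + (b - a) / 4) ⟨by linarith, by linarith⟩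
  have h_mid := h_quad (x := a + 2 * ((b - a) / 4)) ⟨by linarith, by linarith⟩
  have h_right := h_quad (x := a + 3 * ((b - a) / 4)) ⟨by linarith, by linarith⟩
  have h_diff : (1 - α) / (3 * α - 1) * (2 * ((b - a) / 4) ^ 2 / s) = 0 := by
    linear_combination h_left + h_right - 2 * h_mid
  have : 1 - α ≠ 0 := sub_ne_zero.2 hα1.symm
  have h3 : 3 * α - 1 ≠ 0 := by linarith
  have : b - a ≠ 0 := sub_ne_zero.2 hab.ne'
  exact absurd h_diff (by positivity)

lemma log_div_one_sub_lt {I J : ℝ} (hα1 : α ≠ 1) (hI : 0 < I) (hJ : 0 < J)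
    (h : J / (α - 1) < I / (α - 1)) : 1 / (1 - α) * log I < 1 / (1 - α) * log J := by
  rcases hα1.lt_or_gt with hα1 | hα1
  · rw [div_lt_div_right_of_neg (sub_neg.2 hα1)] at h
    exact mul_lt_mul_of_pos_left (log_lt_log hI h) (one_div_pos.2 (sub_pos.2 hα1))
  · rw [div_lt_div_iff_of_pos_right (sub_pos.2 hα1)] at h
    exact mul_lt_mul_of_neg_left (log_lt_log hJ h) (one_div_neg.2 (sub_neg.2 hα1))

lemma log_integral_rpow_lt (hα : 1 / 3 < α) (hα1 : α ≠ 1) (hs : 0 < s)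
    (hf0 : ∀ x, 0 ≤ f x) (hf : Integrable f) (hf1 : ∫ x, f x = 1)
    (hfm : Integrable fun x ↦ (x - m) ^ 2 * f x) (hfs : ∫ x, (x - m) ^ 2 * f x = s)
    (hfα : Integrable fun x ↦ f x ^ α) (hne : ¬ f =ᵐ[volume] qGaussian α s m) :
    1 / (1 - α) * log (∫ x, f x ^ α) <
      log (qGaussianMass α s m) + 1 / (1 - α) * log (2 * α / (3 * α - 1)) := by
  rw [← log_integral_qGaussian_rpow m hα hα1 hs]
  exact log_div_one_sub_lt hα1 (integral_rpow_pos (by linarith) hf0 hfα (by simp [hf1]))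
    (integral_qGaussian_rpow_pos m hα hα1 hs)
    (integral_qGaussian_rpow_div_lt hα hα1 hs hf0 hf hf1 hfm hfs hfα hne)

end MaxEntropy

/-! ### Spreading integer masses over unit intervals -/

lemma measurePreserving_floor :
    MeasurePreserving (Int.floor : ℝ → ℤ) volume Measure.count := by
  refine ⟨Int.measurable_floor, Measure.ext_of_singleton fun k ↦ ?_⟩
  rw [Measure.map_apply Int.measurable_floor (measurableSet_singleton k),
    Int.preimage_floor_singleton, Real.volume_Ico, Measure.count_singleton]
  simp

lemma integrable_comp_floor_iff {c : ℤ → ℝ} :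
    Integrable (fun x : ℝ ↦ c ⌊x⌋) ↔ Summable c :=
  (measurePreserving_floor.integrable_comp .of_discrete).trans
    (integrable_count_iff.trans summable_norm_iff)

lemma hasSum_integral_floor_fract {G : ℤ → ℝ → ℝ}
    (hG : Integrable fun x : ℝ ↦ G ⌊x⌋ (Int.fract x)) :
    HasSum (fun k : ℤ ↦ ∫ t in (0 : ℝ)..1, G k t) (∫ x : ℝ, G ⌊x⌋ (Int.fract x)) := by
  refine hG.hasSum_intervalIntegral_comp_add_int.congr_fun fun k ↦ ?_
  simp only [Int.floor_add_intCast, Int.fract_add_intCast]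
  refine intervalIntegral.integral_congr_Ioo_of_le zero_le_one fun t ht ↦ ?_
  rw [Int.fract_eq_self.2 ⟨ht.1.le, ht.2⟩, Int.floor_eq_zero_iff.2 ⟨ht.1.le, ht.2⟩, zero_add]

lemma hasSum_integral_comp_floor {c : ℤ → ℝ} (hc : Summable c) :
    HasSum c (∫ x : ℝ, c ⌊x⌋) := by
  simpa using hasSum_integral_floor_fract (G := fun k _ ↦ c k) (integrable_comp_floor_iff.2 hc)

lemma integrable_sq_mul_comp_floor {p : ℤ → ℝ} {m : ℝ} (hp : Summable p)
    (hpm : Summable fun k : ℤ ↦ ((k : ℝ) - m) ^ 2 * p k) :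
    Integrable fun x : ℝ ↦ (x - (m + 1 / 2)) ^ 2 * p ⌊x⌋ := by
  refine (integrable_comp_floor_iff.2 ((hpm.abs.mul_left 2).add (hp.abs.div_const 2))).mono'
    (by fun_prop) (.of_forall fun x ↦ ?_)
  have h_fract : (x - ⌊x⌋ - 1 / 2) ^ 2 ≤ 1 / 4 := by
    nlinarith [Int.floor_le x, Int.lt_floor_add_one x]
  have h_sq : (x - (m + 1 / 2)) ^ 2 ≤ 2 * ((⌊x⌋ : ℝ) - m) ^ 2 + 1 / 2 := by
    nlinarith [sq_nonneg (((⌊x⌋ : ℝ) - m) - (x - ⌊x⌋ - 1 / 2))]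
  rw [norm_mul, norm_of_nonneg (sq_nonneg _), abs_mul, abs_of_nonneg (sq_nonneg _), norm_eq_abs]
  linarith [mul_le_mul_of_nonneg_right h_sq (abs_nonneg (p ⌊x⌋))]

lemma integral_sq_mul_comp_floor {p : ℤ → ℝ} {S m v : ℝ} (hp : HasSum p S)
    (hpm : HasSum (fun k : ℤ ↦ ((k : ℝ) - m) ^ 2 * p k) v) :
    ∫ x : ℝ, (x - (m + 1 / 2)) ^ 2 * p ⌊x⌋ = v + S / 12 := by
  have h := integrable_sq_mul_comp_floor hp.summable hpm.summable
  have h_decomp (x : ℝ) : (x - (m + 1 / 2)) ^ 2 * p ⌊x⌋ =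
      (⌊x⌋ + Int.fract x - (m + 1 / 2)) ^ 2 * p ⌊x⌋ := by
    rw [Int.floor_add_fract]
  simp_rw [h_decomp] at h ⊢
  refine (hasSum_integral_floor_fract
    (G := fun k t ↦ (k + t - (m + 1 / 2)) ^ 2 * p k) h).unique ?_
  convert! hpm.add (hp.div_const 12) with k
  have h_poly (t : ℝ) : (k + t - (m + 1 / 2)) ^ 2 * p k =
      (t + (k - (m + 1 / 2))) ^ 2 * p k := by ring
  simp_rw [h_poly]
  rw [intervalIntegral.integral_mul_const, intervalIntegral.integral_comp_add_right (· ^ 2),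
    integral_pow]
  push_cast
  ring

/-! ### The integer-valued case -/

section Discrete

variable {α m v : ℝ} {p : ℤ → ℝ}

lemma summable_rpow_of_hasSum_one (hα : 1 / 3 < α) (hp0 : ∀ k, 0 ≤ p k)
    (hp : HasSum p 1) (hpm : Summable fun k : ℤ ↦ ((k : ℝ) - m) ^ 2 * p k) :
    Summable fun k ↦ p k ^ α := by
  rcases lt_or_ge α 1 with hα1 | hα1
  · exact integrable_comp_floor_iff.1 <| integrable_rpow_of_integrable_sq_mul hα hα1
      (fun x ↦ hp0 ⌊x⌋) (integrable_comp_floor_iff.2 hp.summable)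
      (integrable_sq_mul_comp_floor hp.summable hpm)
  · exact hp.summable.of_nonneg_of_le (fun k ↦ rpow_nonneg (hp0 k) α) fun k ↦
      rpow_le_self_of_le_one (hp0 k) (le_hasSum hp k fun j _ ↦ hp0 j) hα1

lemma log_tsum_rpow_lt (hα : 1 / 3 < α) (hα1 : α ≠ 1) (hp0 : ∀ k, 0 ≤ p k) (hp : HasSum p 1)
    (hpm : HasSum (fun k : ℤ ↦ ((k : ℝ) - m) ^ 2 * p k) v) :
    1 / (1 - α) * log (∑' k, p k ^ α) <
      log (qGaussianMass α (v + 1 / 12) (m + 1 / 2)) +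
        1 / (1 - α) * log (2 * α / (3 * α - 1)) := by
  have hv : 0 ≤ v := hpm.nonneg fun k ↦ mul_nonneg (sq_nonneg _) (hp0 k)
  have hs : 0 < v + 1 / 12 := by linarith
  obtain ⟨j, hj⟩ : ∃ j, 0 < p j := by
    by_contra! h
    exact one_ne_zero (hp.unique (hasSum_zero.congr_fun fun k ↦ (h k).antisymm (hp0 k)))
  have hpα := summable_rpow_of_hasSum_one hα hp0 hp hpm.summable
  have h_const : Set.EqOn (fun x : ℝ ↦ p ⌊x⌋) (fun _ ↦ p j) (Set.Ioo j (j + 1)) := fun x hx ↦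
    congrArg p (Int.floor_eq_iff.2 ⟨hx.1.le, hx.2⟩)
  rw [(hasSum_integral_comp_floor hpα).tsum_eq]
  exact log_integral_rpow_lt (f := fun x ↦ p ⌊x⌋) hα hα1 hs (fun x ↦ hp0 ⌊x⌋)
    (integrable_comp_floor_iff.2 hp.summable) ((hasSum_integral_comp_floor hp.summable).unique hp)
    (integrable_sq_mul_comp_floor hp.summable hpm.summable) (integral_sq_mul_comp_floor hp hpm)
    (integrable_comp_floor_iff.2 hpα)
    (not_ae_eq_qGaussian_of_eqOn_Ioo hα hα1 hs (lt_add_one _) hj h_const)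

end Discrete

/-- Massey-type inequality for Rényi entropies: if `X` is integer-valued with finite
variance `σ²`, then for `1/3 < α < 1` and for `α > 1` the stated strict upper bounds on
`H_α(X)` in terms of `σ² + 1/12` hold. -/
theorem massey_inequality_renyi
    (α : ℝ)
    (p : ℤ → ℝ) (hp0 : ∀ k, 0 ≤ p k) (hp1 : ∑' k, p k = 1)
    (μ : ℝ) (hμ : μ = ∑' k : ℤ, (k : ℝ) * p k)
    (hμs : Summable (fun k : ℤ => (k : ℝ) * p k))
    (σ2 : ℝ) (hσ2 : σ2 = ∑' k : ℤ, ((k : ℝ) - μ) ^ 2 * p k)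
    (hσ2s : Summable (fun k : ℤ => ((k : ℝ) - μ) ^ 2 * p k)) :
    ((1 / 3 < α ∧ α < 1) →
      (1 / (1 - α)) * Real.log (∑' k, p k ^ α) <
        (1 / 2) * Real.log ((3 * α - 1) / (1 - α) * (π * (σ2 + 1 / 12)))
          + (1 / (1 - α)) * Real.log (2 * α / (3 * α - 1))
          + Real.log (Real.Gamma (1 / (1 - α) - 1 / 2) / Real.Gamma (1 / (1 - α)))) ∧
    (1 < α →
      (1 / (1 - α)) * Real.log (∑' k, p k ^ α) <
        (1 / 2) * Real.log ((3 * α - 1) / (α - 1) * (π * (σ2 + 1 / 12)))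
          + (1 / (α - 1)) * Real.log ((3 * α - 1) / (2 * α))
          + Real.log (Real.Gamma (α / (α - 1)) / Real.Gamma (α / (α - 1) + 1 / 2))) := by
  have hp : HasSum p 1 := hp1 ▸ Summable.hasSum (not_imp_comm.1 tsum_eq_zero_of_not_summable
    (hp1 ▸ one_ne_zero))
  have hpσ : HasSum (fun k : ℤ ↦ ((k : ℝ) - μ) ^ 2 * p k) σ2 := hσ2 ▸ hσ2s.hasSum
  have hσ0 : 0 ≤ σ2 := hpσ.nonneg fun k ↦ mul_nonneg (sq_nonneg _) (hp0 k)
  have hs : 0 < σ2 + 1 / 12 := by linarith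
  refine ⟨fun ⟨hα, hα1⟩ ↦ ?_, fun hα1 ↦ ?_⟩
  · rw [add_right_comm, ← log_qGaussianMass_of_lt_one (μ + 1 / 2) hα hα1 hs]
    exact log_tsum_rpow_lt hα hα1.ne hp0 hp hpσ
  · have h_inv : 1 / (α - 1) * log ((3 * α - 1) / (2 * α)) =
        1 / (1 - α) * log (2 * α / (3 * α - 1)) := by
      rw [← inv_div (2 * α), log_inv, ← neg_sub α 1, div_neg, mul_neg, neg_mul]
    rw [add_right_comm, ← log_qGaussianMass_of_one_lt (μ + 1 / 2) hα1 hs, h_inv]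
    exact log_tsum_rpow_lt (by linarith) hα1.ne' hp0 hp hpσ
end

section
/- Let X be a random variable taking values in the nonnegative integers with finite mean μ. Then H(X) < ln( e(μ + 1/2) ) = 1 + ln(μ + 1/2). -/
open MeasureTheory Real

/-!
By Gibbs' inequality, `H(X)` is at most the cross entropy of `p` relative to any geometric law
`n ↦ (1 - r) * r ^ n`, which equals `-(μ * log r + log (1 - r))`. The optimal ratio is
`r = μ / (μ + 1)`, but `r = exp (-s)` with `s = 1 / (μ + 1 / 2)` is close enough, and covers `μ = 0`
as well: then `s * μ = 1 - s / 2`, and the claim reduces to `s < 2 * sinh (s / 2)`.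
-/

lemma negMulLog_le_neg_mul_log_add_sub {x y : ℝ} (hx : 0 ≤ x) (hy : 0 ≤ y) (hyx : y = 0 → x = 0) :
    negMulLog x ≤ -(x * log y) + (y - x) := by
  rcases hy.eq_or_lt with rfl | hy
  · simp [hyx rfl]
  · have hxy : y * (x / y) = x := mul_div_cancel₀ x hy.ne'
    calc negMulLog x
      _ = x / y * negMulLog y + y * negMulLog (x / y) := by rw [← negMulLog_mul, hxy]
      _ ≤ x / y * negMulLog y + y * (1 - x / y) := by
        gcongr
        exact negMulLog_le_one_sub_self (by positivity)
      _ = -(x * log y) + (y - x) := by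
        rw [negMulLog]
        linear_combination (-log y - 1) * hxy

section Gibbs

variable {ι : Type*} {p q : ι → ℝ}

lemma summable_negMulLog_of_summable_mul_log (hp0 : ∀ i, 0 ≤ p i) (hq0 : ∀ i, 0 ≤ q i)
    (hqp : ∀ i, q i = 0 → p i = 0) (hp : Summable p) (hq : Summable q)
    (hpq : Summable fun i ↦ p i * log (q i)) :
    Summable fun i ↦ negMulLog (p i) := by
  refine (hpq.neg.add (hq.sub hp)).of_norm_bounded_eventually ?_
  filter_upwards [hp.tendsto_cofinite_zero.eventually (ge_mem_nhds one_pos)] with i hi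
  rw [norm_of_nonneg (negMulLog_nonneg (hp0 i) hi)]
  exact negMulLog_le_neg_mul_log_add_sub (hp0 i) (hq0 i) (hqp i)

theorem tsum_negMulLog_le_of_hasSum_mul_log {a b c : ℝ} (hp0 : ∀ i, 0 ≤ p i) (hq0 : ∀ i, 0 ≤ q i)
    (hqp : ∀ i, q i = 0 → p i = 0) (hp : HasSum p a) (hq : HasSum q b) (hba : b ≤ a)
    (hpq : HasSum (fun i ↦ p i * log (q i)) c) :
    ∑' i, negMulLog (p i) ≤ -c := by
  have hH := summable_negMulLog_of_summable_mul_log hp0 hq0 hqp hp.summable hq.summable hpq.summable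
  have hle : ∑' i, negMulLog (p i) ≤ -c + (b - a) :=
    hasSum_le (fun i ↦ negMulLog_le_neg_mul_log_add_sub (hp0 i) (hq0 i) (hqp i)) hH.hasSum
      (hpq.neg.add (hq.sub hp))
  linarith

end Gibbs

section Geometric

variable {p : ℕ → ℝ} {μ r : ℝ}

lemma hasSum_mul_log_mul_pow {a c : ℝ} (hc : c ≠ 0) (hr : r ≠ 0) (hp : HasSum p a)
    (hμ : HasSum (fun n : ℕ ↦ (n : ℝ) * p n) μ) :
    HasSum (fun n ↦ p n * log (c * r ^ n)) (μ * log r + a * log c) := by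
  refine ((hμ.mul_right (log r)).add (hp.mul_right (log c))).congr_fun fun n ↦ ?_
  rw [log_mul hc (pow_ne_zero n hr), log_pow]
  ring

lemma hasSum_one_sub_mul_geometric (hr0 : 0 ≤ r) (hr1 : r < 1) :
    HasSum (fun n ↦ (1 - r) * r ^ n) 1 := by
  simpa [mul_inv_cancel₀ (sub_pos.2 hr1).ne'] using
    (hasSum_geometric_of_lt_one hr0 hr1).mul_left (1 - r)

lemma tsum_negMulLog_le_of_hasSum_mean (hp0 : ∀ n, 0 ≤ p n) (hp : HasSum p 1)
    (hμ : HasSum (fun n : ℕ ↦ (n : ℝ) * p n) μ) (hr0 : 0 < r) (hr1 : r < 1) :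
    ∑' n, negMulLog (p n) ≤ -(μ * log r + log (1 - r)) := by
  have hr : 0 < 1 - r := sub_pos.2 hr1
  have hq0 (n : ℕ) : 0 < (1 - r) * r ^ n := by positivity
  have hcross : HasSum (fun n ↦ p n * log ((1 - r) * r ^ n)) (μ * log r + log (1 - r)) := by
    simpa only [one_mul] using hasSum_mul_log_mul_pow hr.ne' hr0.ne' hp hμ
  exact tsum_negMulLog_le_of_hasSum_mul_log hp0 (fun n ↦ (hq0 n).le)
    (fun n hn ↦ absurd hn (hq0 n).ne') hp (hasSum_one_sub_mul_geometric hr0.le hr1) le_rfl hcross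

end Geometric

lemma one_sub_exp_neg_eq_exp_mul_sinh (s : ℝ) :
    1 - exp (-s) = exp (-(s / 2)) * (2 * sinh (s / 2)) := by
  rw [sinh_eq, mul_div_cancel₀ _ two_ne_zero, mul_sub, ← exp_add, ← exp_add, neg_add_cancel,
    exp_zero, ← neg_add, add_halves]

lemma log_lt_half_add_log_one_sub_exp_neg {s : ℝ} (hs : 0 < s) :
    log s < s / 2 + log (1 - exp (-s)) := by
  have hsinh : s / 2 < sinh (s / 2) := self_lt_sinh_iff.2 (half_pos hs)
  have hsinh0 : 0 < 2 * sinh (s / 2) := by linarith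
  rw [one_sub_exp_neg_eq_exp_mul_sinh, log_mul (exp_ne_zero _) hsinh0.ne', log_exp,
    add_neg_cancel_left]
  exact log_lt_log hs (by linarith)

/-- If `X` takes values in the nonnegative integers and has finite mean `μ`, then
`H(X) < ln(e(μ + 1/2)) = 1 + ln(μ + 1/2)`. -/
theorem entropy_lt_log_mean
    (p : ℕ → ℝ) (hp0 : ∀ n, 0 ≤ p n) (hp1 : ∑' n, p n = 1)
    (μ : ℝ) (hμ : μ = ∑' n : ℕ, (n : ℝ) * p n)
    (hμs : Summable (fun n : ℕ => (n : ℝ) * p n)) :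
    (∑' n, p n * Real.log (1 / p n)) < 1 + Real.log (μ + 1 / 2) := by
  have hps : Summable p := not_imp_comm.1 tsum_eq_zero_of_not_summable (hp1 ▸ one_ne_zero)
  have hp : HasSum p 1 := hp1 ▸ hps.hasSum
  have hmean : HasSum (fun n : ℕ ↦ (n : ℝ) * p n) μ := hμ ▸ hμs.hasSum
  have hμ0 : 0 ≤ μ := hmean.nonneg fun n ↦ mul_nonneg n.cast_nonneg (hp0 n)
  set s := (μ + 1 / 2)⁻¹ with hs
  have hs0 : 0 < s := by positivity
  have hr1 : exp (-s) < 1 := exp_lt_one_iff.2 (neg_lt_zero.2 hs0)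
  have hsμ : μ * s = 1 - s / 2 := by
    rw [hs]
    field_simp
    ring
  calc ∑' n, p n * log (1 / p n)
    _ = ∑' n, negMulLog (p n) := by simp [negMulLog]
    _ ≤ -(μ * log (exp (-s)) + log (1 - exp (-s))) :=
      tsum_negMulLog_le_of_hasSum_mean hp0 hp hmean (exp_pos _) hr1
    _ = 1 - (s / 2 + log (1 - exp (-s))) := by rw [log_exp, mul_neg, hsμ]; ring
    _ < 1 - log s := sub_lt_sub_left (log_lt_half_add_log_one_sub_exp_neg hs0) 1
    _ = 1 + log (μ + 1 / 2) := by rw [hs, log_inv, sub_neg_eq_add]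
end

section
/- Let X be a random variable taking values in the nonnegative integers with finite mean μ, and let α > 1/2, α ≠ 1. Then H_α(X) < ln(μ + 1/2) + (α/(1−α)) ln( α/(2α−1) ). -/
open MeasureTheory Real

/-!
Let `m = μ + 1 / 2`, the mean of `X + U` with `U` uniform on `[0, 1]`. Among densities on `[0, ∞)`
with mean `m`, the Rényi entropy of order `α` is largest for the one proportional to
`L ^ (1 / (α - 1))`, where `L x = max (1 + b x) 0` and `b = (1 - α) / ((2 α - 1) m)`. Apply Hölder's
inequality to `p` and the samples of `L` at the midpoints `n + 1 / 2`. On the one hand,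
`∑ p n * L (n + 1 / 2)` equals `1 + b m = α / (2 α - 1)` if `α < 1`, and is at least this if
`α > 1`. On the other hand, `L ^ (α / (α - 1))` is convex and has integral `m` over `[0, ∞)`, so by
the Hermite–Hadamard inequality its midpoint sum is smaller than `m`; this is where strictness
comes from.
-/

lemma two_mul_map_midpoint_le {s : Set ℝ} {f : ℝ → ℝ} (hf : ConvexOn ℝ s f) {x y : ℝ}
    (hx : x ∈ s) (hy : y ∈ s) : 2 * f ((x + y) / 2) ≤ f x + f y := by
  have h := hf.2 hx hy one_half_pos.le one_half_pos.le (add_halves 1)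
  simp only [smul_eq_mul, one_div_mul_eq_div, ← add_div] at h
  linarith

lemma two_mul_map_midpoint_lt {s : Set ℝ} {f : ℝ → ℝ} (hf : StrictConvexOn ℝ s f) {x y : ℝ}
    (hx : x ∈ s) (hy : y ∈ s) (hxy : x ≠ y) : 2 * f ((x + y) / 2) < f x + f y := by
  have h := hf.2 hx hy hxy one_half_pos one_half_pos (add_halves 1)
  simp only [smul_eq_mul, one_div_mul_eq_div, ← add_div] at h
  linarith

lemma sub_mul_map_midpoint_le_integral {f : ℝ → ℝ} {a b : ℝ} (hab : a ≤ b)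
    (hf : ConvexOn ℝ (Set.Icc a b) f) (hfi : IntervalIntegrable f volume a b) :
    (b - a) * f ((a + b) / 2) ≤ ∫ x in a..b, f x := by
  have hrefl : ∫ x in a..b, f (a + b - x) = ∫ x in a..b, f x := by
    rw [intervalIntegral.integral_comp_sub_left, add_sub_cancel_right, add_sub_cancel_left]
  have hrefli : IntervalIntegrable (fun x ↦ f (a + b - x)) volume a b := by
    simpa using (hfi.comp_sub_left (a + b)).symm
  have hle : ∫ _ in a..b, 2 * f ((a + b) / 2) ≤ ∫ x in a..b, (f x + f (a + b - x)) := by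
    refine intervalIntegral.integral_mono_on hab (by simp) (hfi.add hrefli) fun x hx ↦ ?_
    simpa using two_mul_map_midpoint_le hf hx (y := a + b - x) ⟨by grind, by grind⟩
  rw [intervalIntegral.integral_add hfi hrefli, hrefl, intervalIntegral.integral_const,
    smul_eq_mul] at hle
  linarith

lemma sub_mul_map_midpoint_lt_integral {f : ℝ → ℝ} {a b : ℝ} (hab : a < b)
    (hf : StrictConvexOn ℝ (Set.Icc a b) f) (hfi : IntervalIntegrable f volume a b) :
    (b - a) * f ((a + b) / 2) < ∫ x in a..b, f x := by
  set c := (a + b) / 2 with hc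
  have hac : a < c := by linarith
  have hcb : c < b := by linarith
  have hleft : IntervalIntegrable f volume a c :=
    hfi.mono_set (Set.uIcc_subset_uIcc_left (Set.Icc_subset_uIcc ⟨hac.le, hcb.le⟩))
  have hright : IntervalIntegrable f volume c b :=
    hfi.mono_set (Set.uIcc_subset_uIcc_right (Set.Icc_subset_uIcc ⟨hac.le, hcb.le⟩))
  have hquarters : 2 * f c < f ((a + c) / 2) + f ((c + b) / 2) := by
    convert two_mul_map_midpoint_lt hf (x := (a + c) / 2) (y := (c + b) / 2)
      ⟨by linarith, by linarith⟩ ⟨by linarith, by linarith⟩ (by linarith) using 3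
    ring
  calc (b - a) * f c
      < (c - a) * f ((a + c) / 2) + (b - c) * f ((c + b) / 2) := by
        rw [show c - a = (b - a) / 2 by ring, show b - c = (b - a) / 2 by ring]
        linarith [mul_lt_mul_of_pos_left hquarters (sub_pos.2 hab)]
    _ ≤ (∫ x in a..c, f x) + ∫ x in c..b, f x :=
        add_le_add
          (sub_mul_map_midpoint_le_integral hac.le
            (hf.convexOn.subset (Set.Icc_subset_Icc_right hcb.le) (convex_Icc a c)) hleft)
          (sub_mul_map_midpoint_le_integral hcb.le
            (hf.convexOn.subset (Set.Icc_subset_Icc_left hac.le) (convex_Icc c b)) hright)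
    _ = ∫ x in a..b, f x := intervalIntegral.integral_add_adjacent_intervals hleft hright

lemma hasSum_intervalIntegral_natCast {E : Type*} [NormedAddCommGroup E] [NormedSpace ℝ E]
    {μ : Measure ℝ} {f : ℝ → E} (hf : IntegrableOn f (Set.Ioi 0) μ) :
    HasSum (fun n : ℕ ↦ ∫ x in (n : ℝ)..(n + 1 : ℕ), f x ∂μ) (∫ x in Set.Ioi 0, f x ∂μ) := by
  have hunion : ⋃ n : ℕ, Set.Ioc (n : ℝ) (n + 1 : ℕ) = Set.Ioi 0 := by
    have hunbdd : ¬BddAbove (Set.range ((↑) : ℕ → ℝ)) := fun ⟨B, hB⟩ ↦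
      (exists_nat_gt B).elim fun n hn ↦ (hB ⟨n, rfl⟩).not_gt hn
    simpa using iUnion_Ioc_map_succ_eq_Ioi (by simp) hunbdd
  simp only [intervalIntegral.integral_of_le (Nat.cast_le.2 (Nat.le_succ _))]
  rw [← hunion] at hf ⊢
  exact hasSum_integral_iUnion (fun _ ↦ measurableSet_Ioc)
    Nat.mono_cast.pairwise_disjoint_on_Ioc_succ hf

lemma summable_and_tsum_midpoint_lt_integral_Ioi {f : ℝ → ℝ} (hf : ConvexOn ℝ (Set.Ici 0) f)
    (hf' : StrictConvexOn ℝ (Set.Icc 0 1) f) (hf0 : ∀ n : ℕ, 0 ≤ f (n + 1 / 2))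
    (hfi : IntegrableOn f (Set.Ioi 0)) :
    Summable (fun n : ℕ ↦ f (n + 1 / 2)) ∧
      ∑' n : ℕ, f (n + 1 / 2) < ∫ x in Set.Ioi 0, f x := by
  have hint (n : ℕ) : IntervalIntegrable f volume n (n + 1 : ℕ) :=
    (intervalIntegrable_iff_integrableOn_Ioc_of_le (Nat.cast_le.2 n.le_succ)).2
      (hfi.mono_set fun x hx ↦ n.cast_nonneg.trans_lt hx.1)
  have hle (n : ℕ) : f (n + 1 / 2) ≤ ∫ x in (n : ℝ)..(n + 1 : ℕ), f x := by
    convert sub_mul_map_midpoint_le_integral (Nat.cast_le.2 n.le_succ)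
      (hf.subset (fun x hx ↦ n.cast_nonneg.trans hx.1) (convex_Icc _ _)) (hint n) using 1
    push_cast
    ring_nf
  have hlt : f ((0 : ℕ) + 1 / 2) < ∫ x in ((0 : ℕ) : ℝ)..(0 + 1 : ℕ), f x := by
    simpa using sub_mul_map_midpoint_lt_integral one_pos hf' (by simpa using hint 0)
  have hsum := hasSum_intervalIntegral_natCast hfi
  have hs : Summable fun n : ℕ ↦ f (n + 1 / 2) := hsum.summable.of_nonneg_of_le hf0 hle
  exact ⟨hs, hasSum_lt hle hlt hs.hasSum hsum⟩

lemma strictConvexOn_comp_affineMap {𝕜 E F β : Type*} [Field 𝕜] [LinearOrder 𝕜]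
    [AddCommGroup E] [AddCommGroup F] [AddCommMonoid β] [PartialOrder β] [Module 𝕜 E] [Module 𝕜 F]
    [SMul 𝕜 β] {f : F → β} {s : Set F} (hf : StrictConvexOn 𝕜 s f) {g : E →ᵃ[𝕜] F}
    (hg : Function.Injective g) : StrictConvexOn 𝕜 (g ⁻¹' s) (f ∘ g) := by
  refine ⟨hf.1.affine_preimage g, fun x hx y hy hxy a b ha hb hab ↦ ?_⟩
  rw [Function.comp_apply, Convex.combo_affine_apply hab]
  exact hf.2 hx hy (hg.ne hxy) ha hb hab

lemma coe_lineMap_one_one_add (b : ℝ) :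
    ⇑(AffineMap.lineMap (k := ℝ) 1 (1 + b)) = fun x ↦ 1 + b * x := by
  ext x
  simp [AffineMap.lineMap_apply_ring', add_comm, mul_comm]

lemma strictConvexOn_comp_one_add_mul {f : ℝ → ℝ} {s : Set ℝ} (hf : StrictConvexOn ℝ s f) {b : ℝ}
    (hb : b ≠ 0) : StrictConvexOn ℝ ((fun x ↦ 1 + b * x) ⁻¹' s) fun x ↦ f (1 + b * x) := by
  have hinj : Function.Injective (AffineMap.lineMap (k := ℝ) 1 (1 + b)) :=
    AffineMap.lineMap_injective ℝ (by simpa using hb)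
  simpa only [coe_lineMap_one_one_add, Function.comp_def] using
    strictConvexOn_comp_affineMap hf hinj

lemma strictConvexOn_rpow_of_neg {r : ℝ} (hr : r < 0) :
    StrictConvexOn ℝ (Set.Ioi 0) fun x : ℝ ↦ x ^ r := by
  refine strictConvexOn_of_deriv2_pos' (convex_Ioi 0)
    (fun x hx ↦ (continuousAt_rpow_const x r (.inl hx.ne')).continuousWithinAt) fun x hx ↦ ?_
  have hcoeff : 0 < r * (r - 1) := mul_pos_of_neg_of_neg hr (by linarith)
  have hpow : 0 < x ^ (r - 2) := rpow_pos_of_pos hx _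
  simpa [Real.iter_deriv_rpow_const, descPochhammer_succ_right] using mul_pos hcoeff hpow

lemma convexOn_max_zero_rpow {q : ℝ} (hq : 1 ≤ q) :
    ConvexOn ℝ Set.univ fun x : ℝ ↦ max x 0 ^ q := by
  refine ⟨convex_univ, fun x _ y _ a b ha hb hab ↦ ?_⟩
  have hmax : max (a * x + b * y) 0 ≤ a * max x 0 + b * max y 0 :=
    max_le (by gcongr <;> exact le_max_left _ _) (by positivity)
  exact (rpow_le_rpow (le_max_right _ _) hmax (by linarith)).trans
    ((convexOn_rpow hq).2 (le_max_right x 0) (le_max_right y 0) ha hb hab)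

lemma hasDerivAt_one_add_mul_rpow {b r x : ℝ} (hb : b ≠ 0) (hr : r ≠ -1) (hx : 0 < 1 + b * x) :
    HasDerivAt (fun x ↦ (1 + b * x) ^ (r + 1) / (b * (r + 1))) ((1 + b * x) ^ r) x := by
  have hr1 : r + 1 ≠ 0 := by rwa [Ne, add_eq_zero_iff_eq_neg]
  have haff : HasDerivAt (fun x ↦ 1 + b * x) b x := by
    simpa using ((hasDerivAt_id x).const_mul b).const_add 1
  refine ((haff.rpow_const (p := r + 1) (.inl hx.ne')).div_const (b * (r + 1))).congr_deriv ?_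
  rw [add_sub_cancel_right]
  field_simp

open Filter Topology in
lemma integrableOn_and_integral_Ioi_one_add_mul_rpow {b r : ℝ} (hb : 0 < b) (hr : r < -1) :
    IntegrableOn (fun x ↦ (1 + b * x) ^ r) (Set.Ioi 0) ∧
      ∫ x in Set.Ioi 0, (1 + b * x) ^ r = -1 / (b * (r + 1)) := by
  have hbase {x : ℝ} (hx : 0 ≤ x) : 0 < 1 + b * x := by positivity
  have hderiv : ∀ x ∈ Set.Ici (0 : ℝ), HasDerivAt
      (fun x ↦ (1 + b * x) ^ (r + 1) / (b * (r + 1))) ((1 + b * x) ^ r) x := fun x hx ↦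
    hasDerivAt_one_add_mul_rpow hb.ne' hr.ne (hbase hx)
  have hnonneg : ∀ x ∈ Set.Ioi (0 : ℝ), 0 ≤ (1 + b * x) ^ r := fun x hx ↦
    (rpow_pos_of_pos (hbase (le_of_lt hx)) r).le
  have hlim : Tendsto (fun x ↦ (1 + b * x) ^ (r + 1) / (b * (r + 1))) atTop (𝓝 0) := by
    have haff : Tendsto (fun x ↦ 1 + b * x) atTop atTop :=
      tendsto_atTop_add_const_left _ _ (tendsto_id.const_mul_atTop hb)
    have hpow : Tendsto (fun x : ℝ ↦ x ^ (r + 1)) atTop (𝓝 0) := by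
      simpa using tendsto_rpow_neg_atTop (show 0 < -(r + 1) by linarith)
    simpa using (hpow.comp haff).div_const (b * (r + 1))
  refine ⟨integrableOn_Ioi_deriv_of_nonneg' hderiv hnonneg hlim, ?_⟩
  rw [integral_Ioi_of_hasDerivAt_of_nonneg' hderiv hnonneg hlim]
  simp [neg_div]

lemma integrableOn_and_integral_Ioi_max_one_sub_mul_rpow {b q : ℝ} (hb : 0 < b) (hq : 0 < q) :
    IntegrableOn (fun x ↦ max (1 - b * x) 0 ^ q) (Set.Ioi 0) ∧
      ∫ x in Set.Ioi 0, max (1 - b * x) 0 ^ q = 1 / (b * (q + 1)) := by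
  have hvanish : ∀ x ∈ Set.Ioi 0 \ Set.Ioc 0 (1 / b), max (1 - b * x) 0 ^ q = 0 := by
    rintro x ⟨hx0, hx⟩
    have : 1 < b * x := (div_lt_iff₀' hb).1 (not_le.1 fun h ↦ hx ⟨hx0, h⟩)
    rw [max_eq_right (by linarith), zero_rpow hq.ne']
  have hcont : Continuous fun x ↦ max (1 - b * x) 0 ^ q := by fun_prop (disch := grind)
  have hsupp : ∀ x ∈ Set.uIcc 0 (1 / b), max (1 - b * x) 0 ^ q = (1 - b * x) ^ q := by
    intro x hx
    rw [Set.uIcc_of_le (by positivity)] at hx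
    rw [max_eq_left (sub_nonneg.2 ((le_div_iff₀' hb).1 hx.2))]
  refine ⟨hcont.integrableOn_Ioc.of_forall_sdiff_eq_zero measurableSet_Ioi hvanish, ?_⟩
  calc ∫ x in Set.Ioi 0, max (1 - b * x) 0 ^ q
      = ∫ x in (0 : ℝ)..1 / b, max (1 - b * x) 0 ^ q := by
        rw [intervalIntegral.integral_of_le (by positivity),
          setIntegral_eq_of_subset_of_forall_sdiff_eq_zero measurableSet_Ioi
            Set.Ioc_subset_Ioi_self hvanish]
    _ = ∫ x in (0 : ℝ)..1 / b, (1 - b * x) ^ q := intervalIntegral.integral_congr hsupp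
    _ = b⁻¹ * ∫ y in (0 : ℝ)..1, y ^ q := by
        rw [intervalIntegral.integral_comp_sub_mul (· ^ q) hb.ne']
        simp [hb.ne']
    _ = 1 / (b * (q + 1)) := by
        rw [integral_rpow (.inl (by linarith)), one_rpow, zero_rpow (by linarith)]
        field_simp
        simp

lemma summable_and_tsum_one_add_mul_rpow_lt {b r : ℝ} (hb : 0 < b) (hr : r < -1) :
    Summable (fun n : ℕ ↦ (1 + b * (n + 1 / 2)) ^ r) ∧
      ∑' n : ℕ, (1 + b * (n + 1 / 2)) ^ r < -1 / (b * (r + 1)) := by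
  obtain ⟨hint, hval⟩ := integrableOn_and_integral_Ioi_one_add_mul_rpow hb hr
  have hconv : StrictConvexOn ℝ (Set.Ici 0) fun x : ℝ ↦ (1 + b * x) ^ r :=
    (strictConvexOn_comp_one_add_mul (strictConvexOn_rpow_of_neg (by linarith)) hb.ne').subset
      (fun x (hx : 0 ≤ x) ↦ show 0 < 1 + b * x by positivity) (convex_Ici 0)
  rw [← hval]
  exact summable_and_tsum_midpoint_lt_integral_Ioi hconv.convexOn
    (hconv.subset Set.Icc_subset_Ici_self (convex_Icc 0 1)) (fun n ↦ by positivity) hint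

lemma summable_and_tsum_max_one_sub_mul_rpow_lt {b q : ℝ} (hb0 : 0 < b) (hb1 : b ≤ 1) (hq : 1 < q) :
    Summable (fun n : ℕ ↦ max (1 - b * (n + 1 / 2)) 0 ^ q) ∧
      ∑' n : ℕ, max (1 - b * (n + 1 / 2)) 0 ^ q < 1 / (b * (q + 1)) := by
  obtain ⟨hint, hval⟩ :=
    integrableOn_and_integral_Ioi_max_one_sub_mul_rpow hb0 (zero_lt_one.trans hq)
  have hnonneg {x : ℝ} (hx : x ∈ Set.Icc 0 1) : 0 ≤ 1 - b * x :=
    sub_nonneg.2 (mul_le_one₀ hb1 hx.1 hx.2)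
  have hconv : ConvexOn ℝ Set.univ fun x ↦ max (1 - b * x) 0 ^ q := by
    have h := (convexOn_max_zero_rpow hq.le).comp_affineMap (AffineMap.lineMap 1 (1 + -b))
    rw [coe_lineMap_one_one_add] at h
    simpa only [Function.comp_def, Set.preimage_univ, neg_mul, ← sub_eq_add_neg] using h
  have hstrict : StrictConvexOn ℝ (Set.Icc 0 1) fun x ↦ max (1 - b * x) 0 ^ q := by
    have h := strictConvexOn_comp_one_add_mul (strictConvexOn_rpow hq) (neg_ne_zero.2 hb0.ne')
    refine (h.subset (fun x hx ↦ ?_) (convex_Icc 0 1)).congr fun x hx ↦ ?_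
    · simpa [← sub_eq_add_neg] using hnonneg hx
    · simp only [neg_mul, ← sub_eq_add_neg, max_eq_left (hnonneg hx)]
  rw [← hval]
  exact summable_and_tsum_midpoint_lt_integral_Ioi
    (hconv.subset (Set.subset_univ _) (convex_Ici 0)) hstrict (fun n ↦ by positivity) hint

section RpowSum

variable {ι : Type*} {α : ℝ} {p L : ι → ℝ}

lemma summable_and_tsum_rpow_le_rpow_tsum_mul_mul (hα0 : 0 < α) (hα1 : α < 1)
    (hp : ∀ i, 0 ≤ p i) (hL : ∀ i, 0 < L i) (hpL : Summable fun i ↦ p i * L i)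
    (hLs : Summable fun i ↦ L i ^ (α / (α - 1))) :
    Summable (fun i ↦ p i ^ α) ∧
      ∑' i, p i ^ α ≤ (∑' i, p i * L i) ^ α * (∑' i, L i ^ (α / (α - 1))) ^ (1 - α) := by
  have hfst (i : ι) : ((p i * L i) ^ α) ^ (1 / α) = p i * L i := by
    rw [one_div, rpow_rpow_inv (mul_nonneg (hp i) (hL i).le) hα0.ne']
  have hsnd (i : ι) : (L i ^ (-α)) ^ (1 / (1 - α)) = L i ^ (α / (α - 1)) := by
    rw [← rpow_mul (hL i).le, mul_one_div, neg_div, ← div_neg, neg_sub]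
  have hmul (i : ι) : (p i * L i) ^ α * L i ^ (-α) = p i ^ α := by
    rw [mul_rpow (hp i) (hL i).le, mul_assoc, ← rpow_add (hL i), add_neg_cancel, rpow_zero,
      mul_one]
  simpa only [hfst, hsnd, hmul, one_div_one_div] using
    summable_and_inner_le_Lp_mul_Lq_tsum_of_nonneg
      (holderConjugate_one_div hα0 (sub_pos.2 hα1) (add_sub_cancel α 1))
      (f := fun i ↦ (p i * L i) ^ α) (g := fun i ↦ L i ^ (-α))
      (fun i ↦ rpow_nonneg (mul_nonneg (hp i) (hL i).le) _) (fun i ↦ rpow_nonneg (hL i).le _)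
      (by simpa only [hfst] using hpL) (by simpa only [hsnd] using hLs)

lemma summable_and_rpow_tsum_mul_le_tsum_rpow_mul (hα : 1 < α)
    (hp : ∀ i, 0 ≤ p i) (hL : ∀ i, 0 ≤ L i) (hps : Summable fun i ↦ p i ^ α)
    (hLs : Summable fun i ↦ L i ^ (α / (α - 1))) :
    Summable (fun i ↦ p i * L i) ∧
      (∑' i, p i * L i) ^ α ≤ (∑' i, p i ^ α) * (∑' i, L i ^ (α / (α - 1))) ^ (α - 1) := by
  obtain ⟨hsum, hle⟩ := summable_and_inner_le_Lp_mul_Lq_tsum_of_nonneg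
    (.conjExponent hα) hp hL hps hLs
  have hP : 0 ≤ ∑' i, p i ^ α := tsum_nonneg fun i ↦ rpow_nonneg (hp i) _
  have hT : 0 ≤ ∑' i, L i ^ (α / (α - 1)) := tsum_nonneg fun i ↦ rpow_nonneg (hL i) _
  refine ⟨hsum, ?_⟩
  calc (∑' i, p i * L i) ^ α
      ≤ ((∑' i, p i ^ α) ^ (1 / α) * (∑' i, L i ^ (α / (α - 1))) ^ (1 / (α / (α - 1)))) ^ α :=
        rpow_le_rpow (tsum_nonneg fun i ↦ mul_nonneg (hp i) (hL i)) hle (by linarith)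
    _ = (∑' i, p i ^ α) * (∑' i, L i ^ (α / (α - 1))) ^ (α - 1) := by
        rw [mul_rpow (rpow_nonneg hP _) (rpow_nonneg hT _), ← rpow_mul hP, ← rpow_mul hT,
          one_div_mul_cancel (by linarith), rpow_one, one_div_div,
          div_mul_cancel₀ _ (by linarith)]

lemma tsum_rpow_pos (hp0 : ∀ i, 0 ≤ p i) (hp : ∑' i, p i ≠ 0) (hs : Summable fun i ↦ p i ^ α) :
    0 < ∑' i, p i ^ α := by
  obtain ⟨i, hi⟩ : ∃ i, p i ≠ 0 := by
    contrapose! hp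
    simp [hp]
  exact hs.tsum_pos (fun j ↦ rpow_nonneg (hp0 j) _) i (rpow_pos_of_pos ((hp0 i).lt_of_ne' hi) _)

lemma summable_rpow_of_one_le (hα : 1 ≤ α) (hp0 : ∀ i, 0 ≤ p i) (hp : Summable p) :
    Summable fun i ↦ p i ^ α := by
  refine .of_norm_bounded_eventually hp ?_
  filter_upwards [hp.tendsto_cofinite_zero.eventually_le_const one_pos] with i hi
  rw [norm_of_nonneg (rpow_nonneg (hp0 i) _)]
  exact (rpow_le_rpow_of_exponent_ge' (hp0 i) hi zero_le_one hα).trans_eq (rpow_one _)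

end RpowSum

section Distribution

variable {α μ : ℝ} {p : ℕ → ℝ}

lemma hasSum_mul_affine_midpoint (hp : HasSum p 1) (hμ : HasSum (fun n : ℕ ↦ n * p n) μ) (b : ℝ) :
    HasSum (fun n : ℕ ↦ p n * (1 + b * (n + 1 / 2))) (1 + b * (μ + 1 / 2)) := by
  convert hp.add ((hμ.add (hp.mul_left (1 / 2))).mul_left b) using 1
  · ext n
    ring
  · rw [mul_one]

lemma summable_and_tsum_rpow_lt_of_lt_one (hα : 1 / 2 < α) (hα1 : α < 1) (hp0 : ∀ n, 0 ≤ p n)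
    (hp : HasSum p 1) (hμ : HasSum (fun n : ℕ ↦ n * p n) μ) :
    Summable (fun n ↦ p n ^ α) ∧
      ∑' n, p n ^ α < (α / (2 * α - 1)) ^ α * (μ + 1 / 2) ^ (1 - α) := by
  have hμ0 : 0 ≤ μ := hμ.nonneg fun n ↦ mul_nonneg n.cast_nonneg (hp0 n)
  have hα' : 0 < 2 * α - 1 := by linarith
  have hα1' : 0 < 1 - α := sub_pos.2 hα1
  set b := (1 - α) / ((2 * α - 1) * (μ + 1 / 2)) with hb
  have hb0 : 0 < b := div_pos hα1' (by positivity)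
  have hr : α / (α - 1) < -1 := by
    rw [div_lt_iff_of_neg (sub_neg.2 hα1)]
    linarith
  have hmass : -1 / (b * (α / (α - 1) + 1)) = μ + 1 / 2 := by
    have hsum : α / (α - 1) + 1 = -((2 * α - 1) / (1 - α)) := by grind
    have hprod : b * ((2 * α - 1) / (1 - α)) = 1 / (μ + 1 / 2) := by grind
    rw [hsum, mul_neg, hprod, neg_div_neg_eq, one_div_one_div]
  have hmean : 1 + b * (μ + 1 / 2) = α / (2 * α - 1) := by
    rw [hb]
    grind
  obtain ⟨hT, hTlt⟩ := summable_and_tsum_one_add_mul_rpow_lt hb0 hr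
  have hpL := hasSum_mul_affine_midpoint hp hμ b
  obtain ⟨hS, hSle⟩ := summable_and_tsum_rpow_le_rpow_tsum_mul_mul (by linarith) hα1 hp0
    (fun n : ℕ ↦ (by positivity : 0 < 1 + b * ((n : ℝ) + 1 / 2))) hpL.summable hT
  rw [hpL.tsum_eq, hmean] at hSle
  rw [hmass] at hTlt
  refine ⟨hS, hSle.trans_lt ?_⟩
  gcongr

lemma lt_tsum_rpow_of_one_lt (hα : 1 < α) (hp0 : ∀ n, 0 ≤ p n)
    (hp : HasSum p 1) (hμ : HasSum (fun n : ℕ ↦ n * p n) μ) :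
    (α / (2 * α - 1)) ^ α * (μ + 1 / 2) ^ (1 - α) < ∑' n, p n ^ α := by
  have hμ0 : 0 ≤ μ := hμ.nonneg fun n ↦ mul_nonneg n.cast_nonneg (hp0 n)
  have hα' : 0 < 2 * α - 1 := by linarith
  have hα1 : 0 < α - 1 := sub_pos.2 hα
  set b := (α - 1) / ((2 * α - 1) * (μ + 1 / 2)) with hb
  have hb0 : 0 < b := by positivity
  have hb1 : b ≤ 1 := by
    rw [hb, div_le_one (by positivity)]
    nlinarith
  have hq : 1 < α / (α - 1) := (one_lt_div hα1).2 (by linarith)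
  have hmass : 1 / (b * (α / (α - 1) + 1)) = μ + 1 / 2 := by
    rw [hb]
    field_simp
    ring
  have hmean : 1 + -b * (μ + 1 / 2) = α / (2 * α - 1) := by grind
  obtain ⟨hT, hTlt⟩ := summable_and_tsum_max_one_sub_mul_rpow_lt hb0 hb1 hq
  have hS := summable_rpow_of_one_le hα.le hp0 hp.summable
  obtain ⟨hpL, hle⟩ :=
    summable_and_rpow_tsum_mul_le_tsum_rpow_mul hα hp0 (fun _ ↦ le_max_right _ _) hS hT
  have hSpos : 0 < ∑' n, p n ^ α := tsum_rpow_pos hp0 (hp.tsum_eq ▸ one_ne_zero) hS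
  have hmean_le : α / (2 * α - 1) ≤ ∑' n : ℕ, p n * max (1 - b * (n + 1 / 2)) 0 := by
    rw [← hmean]
    refine hasSum_le (fun n ↦ ?_) (hasSum_mul_affine_midpoint hp hμ (-b)) hpL.hasSum
    rw [neg_mul, ← sub_eq_add_neg]
    exact mul_le_mul_of_nonneg_left (le_max_left _ _) (hp0 n)
  rw [hmass] at hTlt
  rw [← neg_sub α 1, rpow_neg (by positivity), ← div_eq_mul_inv, div_lt_iff₀ (by positivity)]
  calc (α / (2 * α - 1)) ^ α
      ≤ (∑' n : ℕ, p n * max (1 - b * (n + 1 / 2)) 0) ^ α := by gcongr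
    _ ≤ (∑' n, p n ^ α) * (∑' n : ℕ, max (1 - b * (n + 1 / 2)) 0 ^ (α / (α - 1))) ^ (α - 1) := hle
    _ < (∑' n, p n ^ α) * (μ + 1 / 2) ^ (α - 1) := by
        gcongr

end Distribution

/-- If `X` takes values in the nonnegative integers with finite mean `μ`, and `α > 1/2`,
`α ≠ 1`, then `H_α(X) < ln(μ + 1/2) + (α/(1-α)) ln(α/(2α-1))`. -/
theorem renyi_entropy_lt_log_mean
    (α : ℝ) (hα : 1 / 2 < α) (hα1 : α ≠ 1)
    (p : ℕ → ℝ) (hp0 : ∀ n, 0 ≤ p n) (hp1 : ∑' n, p n = 1)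
    (μ : ℝ) (hμ : μ = ∑' n : ℕ, (n : ℝ) * p n)
    (hμs : Summable (fun n : ℕ => (n : ℝ) * p n)) :
    (1 / (1 - α)) * Real.log (∑' n, p n ^ α) <
      Real.log (μ + 1 / 2) + (α / (1 - α)) * Real.log (α / (2 * α - 1)) := by
  have hps : Summable p := not_imp_comm.1 tsum_eq_zero_of_not_summable (by simp [hp1])
  have hp : HasSum p 1 := hp1 ▸ hps.hasSum
  have hmean : HasSum (fun n : ℕ ↦ n * p n) μ := hμ ▸ hμs.hasSum
  have hμ0 : 0 ≤ μ := hmean.nonneg fun n ↦ mul_nonneg n.cast_nonneg (hp0 n)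
  have hC : 0 < α / (2 * α - 1) := div_pos (by linarith) (by linarith)
  have hrhs : Real.log (μ + 1 / 2) + (α / (1 - α)) * Real.log (α / (2 * α - 1)) =
      (1 / (1 - α)) * Real.log ((α / (2 * α - 1)) ^ α * (μ + 1 / 2) ^ (1 - α)) := by
    have : 1 - α ≠ 0 := sub_ne_zero.2 hα1.symm
    rw [log_mul (by positivity) (by positivity), log_rpow hC, log_rpow (by positivity)]
    field_simp
    ring
  rw [hrhs]
  rcases lt_or_gt_of_ne hα1 with hlt | hgt
  · obtain ⟨hS, hSlt⟩ := summable_and_tsum_rpow_lt_of_lt_one hα hlt hp0 hp hmean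
    exact mul_lt_mul_of_pos_left (log_lt_log (tsum_rpow_pos hp0 (hp1 ▸ one_ne_zero) hS) hSlt)
      (one_div_pos.2 (sub_pos.2 hlt))
  · exact mul_lt_mul_of_neg_left
      (log_lt_log (by positivity) (lt_tsum_rpow_of_one_lt hgt hp0 hp hmean))
      (one_div_neg.2 (sub_neg.2 hgt))
end

section
/- Let X be an integer-valued random variable with finite variance σ² > 0. Then H(X) < (1/2) ln(2πeσ²) + 2/(e^{2π²σ²} − 1). -/
open MeasureTheory Real

/-!
Among the laws on `ℤ` with a given second moment `s` about `c`, compare `p` with the discrete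
Gaussian with weights `exp (-(k - c)² / (2s))`. Gibbs' inequality bounds `H(p)` by
`log Z + 1/2`, where `Z` is the sum of these weights. By Poisson summation
`Z = √(2πs) (1 + 2 ∑_{n ≥ 1} cos (2πcn) exp (-2π²sn²))`, and since `n² ≥ n` the sum over `n` is at
most the geometric series `∑_{n ≥ 1} exp (-2π²sn) = 1 / (exp (2π²s) - 1)`. The strict inequality
comes from `log (1 + x) < x`.
-/

open HurwitzZeta

section Gibbs

/-- The Shannon entropy `H(X)`, in nats, of a discrete random variable with mass function `p`.
A mass function is encoded as a plain real-valued function, its properties being hypotheses of the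
lemmas; for a mass function of infinite entropy the value is the junk `0`. -/
noncomputable def shannonEntropy {ι : Type*} (p : ι → ℝ) : ℝ := ∑' i, p i * log (1 / p i)

lemma mul_log_one_div_nonneg {x : ℝ} (hx0 : 0 ≤ x) (hx1 : x ≤ 1) : 0 ≤ x * log (1 / x) := by
  simpa [negMulLog] using negMulLog_nonneg hx0 hx1

lemma mul_log_one_div_le {x y : ℝ} (hx : 0 ≤ x) (hy : 0 < y) :
    x * log (1 / x) ≤ x * log (1 / y) + (y - x) := by
  rcases hx.eq_or_lt with rfl | hx
  · simpa using hy.le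
  calc x * log (1 / x) = x * log (1 / y) + x * log (y / x) := by
        rw [log_div hy.ne' hx.ne', one_div, one_div, log_inv, log_inv]; ring
    _ ≤ x * log (1 / y) + x * (y / x - 1) := by
        gcongr; exact log_le_sub_one_of_pos (by positivity)
    _ = x * log (1 / y) + (y - x) := by field_simp

variable {ι : Type*} {p : ι → ℝ}

lemma shannonEntropy_le_crossEntropy {q : ι → ℝ} {E : ℝ} (hp0 : ∀ i, 0 ≤ p i) (hp : HasSum p 1)
    (hq0 : ∀ i, 0 < q i) (hq : HasSum q 1) (hE : HasSum (fun i ↦ p i * log (1 / q i)) E) :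
    shannonEntropy p ≤ E := by
  have hle (i : ι) := mul_log_one_div_le (hp0 i) (hq0 i)
  have hbound : HasSum (fun i ↦ p i * log (1 / q i) + (q i - p i)) E := by
    simpa using hE.add (hq.sub hp)
  have hp1 (i : ι) : p i ≤ 1 := le_hasSum hp i fun j _ ↦ hp0 j
  have hsum : Summable fun i ↦ p i * log (1 / p i) :=
    .of_nonneg_of_le (fun i ↦ mul_log_one_div_nonneg (hp0 i) (hp1 i)) hle hbound.summable
  exact hasSum_le hle hsum.hasSum hbound

lemma shannonEntropy_le_log_partition {V : ι → ℝ} {Z E : ℝ} (hp0 : ∀ i, 0 ≤ p i)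
    (hp : HasSum p 1) (hZ : HasSum (fun i ↦ exp (-V i)) Z) (hE : HasSum (fun i ↦ p i * V i) E) :
    shannonEntropy p ≤ log Z + E := by
  obtain ⟨i₀⟩ : Nonempty ι := by
    by_contra! h
    exact one_ne_zero (hp.unique hasSum_empty)
  have hZ0 : 0 < Z := (exp_pos (-V i₀)).trans_le (le_hasSum hZ i₀ fun j _ ↦ (exp_pos _).le)
  have hlog (i : ι) : log (1 / (exp (-V i) / Z)) = log Z + V i := by
    rw [one_div_div, log_div hZ0.ne' (exp_pos _).ne', log_exp, sub_neg_eq_add]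
  refine shannonEntropy_le_crossEntropy (q := fun i ↦ exp (-V i) / Z) hp0 hp
    (fun i ↦ by positivity) (by simpa [hZ0.ne'] using hZ.div_const Z) ?_
  simpa only [hlog, mul_add, one_mul] using (hp.mul_right (log Z)).add hE

end Gibbs

section Theta

lemma hasSum_exp_neg_mul_succ {x : ℝ} (hx : 0 < x) :
    HasSum (fun n : ℕ ↦ exp (-(x * (n + 1)))) (1 / (exp x - 1)) := by
  have hgeom := (hasSum_geometric_of_lt_one (exp_pos (-x)).le
    (exp_lt_one_iff.2 (neg_neg_of_pos hx))).mul_left (exp (-x))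
  have hval : exp (-x) * (1 - exp (-x))⁻¹ = 1 / (exp x - 1) := by
    have : exp x - 1 ≠ 0 := (sub_pos.2 (one_lt_exp_iff.2 hx)).ne'
    rw [exp_neg]
    field_simp
  refine (hval ▸ hgeom).congr_fun fun n ↦ ?_
  rw [← exp_nat_mul, ← exp_add]
  ring_nf

lemma cosKernel_le (a : UnitAddCircle) {t : ℝ} (ht : 0 < t) :
    cosKernel a t ≤ 1 + 2 / (exp (π * t) - 1) := by
  induction a using QuotientAddGroup.induction_on with | H a =>
  have hgeom := (hasSum_exp_neg_mul_succ (mul_pos pi_pos ht)).mul_left 2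
  rw [mul_one_div] at hgeom
  refine sub_le_iff_le_add'.1 (hasSum_le (fun n ↦ ?_) (hasSum_nat_cosKernel₀ a ht) hgeom)
  have hsq : (n + 1 : ℝ) ≤ (n + 1) ^ 2 := le_self_pow₀ (by simp) two_ne_zero
  have hexp : exp (-π * (n + 1) ^ 2 * t) ≤ exp (-(π * t * (n + 1))) := by
    rw [exp_le_exp]
    linarith [mul_le_mul_of_nonneg_left hsq (mul_pos pi_pos ht).le]
  rw [mul_assoc]
  gcongr
  exact (mul_le_of_le_one_left (exp_pos _).le (cos_le_one _)).trans hexp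

lemma evenKernel_pos (a : UnitAddCircle) {t : ℝ} (ht : 0 < t) : 0 < evenKernel a t := by
  induction a using QuotientAddGroup.induction_on with | H a =>
  exact (exp_pos _).trans_le (le_hasSum (hasSum_int_evenKernel a ht) 0 fun _ _ ↦ (exp_pos _).le)

lemma evenKernel_inv_le (a : UnitAddCircle) {t : ℝ} (ht : 0 < t) :
    evenKernel a t⁻¹ ≤ √t * (1 + 2 / (exp (π * t) - 1)) := by
  rw [evenKernel_functional_equation, ← sqrt_eq_rpow, sqrt_inv, one_div, inv_inv, one_div, inv_inv]
  gcongr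
  exact cosKernel_le a ht

lemma log_evenKernel_inv_lt (a : UnitAddCircle) {t : ℝ} (ht : 0 < t) :
    log (evenKernel a t⁻¹) < log t / 2 + 2 / (exp (π * t) - 1) := by
  have hx : 0 < 2 / (exp (π * t) - 1) :=
    div_pos two_pos (sub_pos.2 (one_lt_exp_iff.2 (by positivity)))
  calc log (evenKernel a t⁻¹) ≤ log (√t * (1 + 2 / (exp (π * t) - 1))) :=
        log_le_log (evenKernel_pos a (inv_pos.2 ht)) (evenKernel_inv_le a ht)
    _ = log t / 2 + log (1 + 2 / (exp (π * t) - 1)) := by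
        rw [log_mul (by positivity) (by positivity), log_sqrt ht.le]
    _ < log t / 2 + 2 / (exp (π * t) - 1) := by
        linarith [log_lt_sub_one_of_pos (x := 1 + 2 / (exp (π * t) - 1)) (by positivity)
          (by linarith)]

lemma hasSum_exp_neg_sub_sq_div (c : ℝ) {s : ℝ} (hs : 0 < s) :
    HasSum (fun k : ℤ ↦ exp (-((k - c) ^ 2 / (2 * s)))) (evenKernel (-c : ℝ) (2 * π * s)⁻¹) := by
  convert hasSum_int_evenKernel (-c) (inv_pos.2 (by positivity : 0 < 2 * π * s)) using 3
  field_simp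
  ring

end Theta

theorem improved_massey_inequality_general {p : ℤ → ℝ} (hp0 : ∀ k, 0 ≤ p k) (hp1 : ∑' k, p k = 1)
    {c s : ℝ} (hs : 0 < s) (hsum : Summable fun k : ℤ ↦ ((k : ℝ) - c) ^ 2 * p k)
    (hle : ∑' k : ℤ, ((k : ℝ) - c) ^ 2 * p k ≤ s) :
    shannonEntropy p <
      (1 / 2) * log (2 * π * exp 1 * s) + 2 / (exp (2 * π ^ 2 * s) - 1) := by
  have hp_sum : Summable p := by
    by_contra h
    simp [tsum_eq_zero_of_not_summable h] at hp1
  have hp : HasSum p 1 := hp1 ▸ hp_sum.hasSum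
  set v := ∑' k : ℤ, ((k : ℝ) - c) ^ 2 * p k
  have hE : HasSum (fun k : ℤ ↦ p k * ((k - c) ^ 2 / (2 * s))) (v / (2 * s)) := by
    simpa only [mul_comm (p _), div_mul_eq_mul_div] using hsum.hasSum.div_const (2 * s)
  have hv : v / (2 * s) ≤ 1 / 2 := by
    rw [div_le_div_iff₀ (by positivity) two_pos]
    linarith
  calc shannonEntropy p
      ≤ log (evenKernel (-c : ℝ) (2 * π * s)⁻¹) + v / (2 * s) :=
        shannonEntropy_le_log_partition hp0 hp (hasSum_exp_neg_sub_sq_div c hs) hE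
    _ < log (2 * π * s) / 2 + 2 / (exp (π * (2 * π * s)) - 1) + 1 / 2 :=
        add_lt_add_of_lt_of_le (log_evenKernel_inv_lt _ (by positivity)) hv
    _ = (1 / 2) * log (2 * π * exp 1 * s) + 2 / (exp (2 * π ^ 2 * s) - 1) := by
        rw [mul_right_comm (2 * π), log_mul (x := 2 * π * s) (by positivity) (exp_ne_zero 1),
          log_exp, show π * (2 * π * s) = 2 * π ^ 2 * s by ring]
        ring

/-- Improved Massey inequality: if `X` is integer-valued with finite variance `σ² > 0`,
then `H(X) < (1/2) ln(2πeσ²) + 2/(e^{2π²σ²} - 1)`. -/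
theorem improved_massey_inequality
    (p : ℤ → ℝ) (hp0 : ∀ k, 0 ≤ p k) (hp1 : ∑' k, p k = 1)
    (μ : ℝ) (hμ : μ = ∑' k : ℤ, (k : ℝ) * p k)
    (hμs : Summable (fun k : ℤ => (k : ℝ) * p k))
    (σ2 : ℝ) (hσ2 : σ2 = ∑' k : ℤ, ((k : ℝ) - μ) ^ 2 * p k)
    (hσ2s : Summable (fun k : ℤ => ((k : ℝ) - μ) ^ 2 * p k)) (hσ2pos : 0 < σ2) :
    (∑' k, p k * Real.log (1 / p k)) <
      (1 / 2) * Real.log (2 * π * Real.exp 1 * σ2)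
        + 2 / (Real.exp (2 * π ^ 2 * σ2) - 1) :=
  improved_massey_inequality_general hp0 hp1 hσ2pos hσ2s hσ2.ge
end

section
/- Let X be an integer-valued random variable with finite variance σ² > 0 and finite Rényi entropies of orders 1/2 and 2/3. Then H_{1/2}(X) < ln(2πσ) + 2/(e^{2πσ} − 1), and H_{2/3}(X) < ln( 8πσ/(3√3) ) + 4(1 + πσ)/(e^{2πσ} − 1). -/
open MeasureTheory Real

/-!
Fix `s > 0`, let `c` be the centre of `X` and put `z = -c + i s`, so that `E |z + X|² = σ² + s²`.
Hölder's inequality applied to `p = (|z + k|² p) · |z + k|⁻²` gives, for `α = m / (m + 1)`,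
`H_α ≤ ln ((σ² + s²) ^ m · ∑ |z + k| ^ (-2m))`; the orders `1/2` and `2/3` are `m = 1` and `m = 2`.

The lattice sums have closed forms in `q = exp (2πiz)`. Since `Im (z + k)⁻¹ = -s |z + k|⁻²`, the
first one is read off from the partial fractions of `π cot (πz)`; since
`Re (z + k)⁻² = |z + k|⁻² - 2 s² |z + k|⁻⁴`, the second follows from the first and Lipschitz'
formula for `∑ (z + k)⁻²`. As `|q| = exp (-2πs)`, both sums are `∫ (x² + s²)⁻ᵐ dx` times
`1 + (exponentially small)`. Taking `s = σ` for `m = 1` and `s = √3 σ` for `m = 2` minimises the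
leading factor `(σ² + s²) ^ m ∫ (x² + s²)⁻ᵐ dx`.
-/

section RenyiEntropy

variable {ι : Type*} {p w : ι → ℝ} {α β : ℝ}

/-- The Rényi entropy `H_α` of a probability mass function `p`, in nats. It has the junk value `0`
at `α = 1`, and also when `p ^ α` is not summable, where for `0 < α < 1` the true value is `+∞`. -/
noncomputable def renyiEntropy (α : ℝ) (p : ι → ℝ) : ℝ :=
  1 / (1 - α) * log (∑' i, p i ^ α)

lemma summable_rpow_and_tsum_rpow_le (h : HolderTriple 1 β α) (hp : ∀ i, 0 ≤ p i)
    (hw : ∀ i, 0 < w i) (hwp : Summable fun i => w i * p i)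
    (hwβ : Summable fun i => (w i)⁻¹ ^ β) :
    (Summable fun i => p i ^ α) ∧
      ∑' i, p i ^ α ≤ (∑' i, w i * p i) ^ α * (∑' i, (w i)⁻¹ ^ β) ^ (α / β) := by
  have cancel : ∀ i, w i * p i * (w i)⁻¹ = p i := fun i => by
    rw [mul_right_comm, mul_inv_cancel₀ (hw i).ne', one_mul]
  have hölder := summable_and_Lr_rpow_le_Lp_mul_Lq_tsum_of_nonneg h
    (fun i => mul_nonneg (hw i).le (hp i)) (fun i => (inv_pos.2 (hw i)).le)
    (by simpa only [rpow_one] using hwp) hwβ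
  simpa only [cancel, rpow_one, div_one] using hölder

lemma summable_rpow_and_renyiEntropy_le_log (h : HolderTriple 1 β α) (hp : ∀ i, 0 ≤ p i)
    (hp_pos : ∃ i, 0 < p i) (hw : ∀ i, 0 < w i) (hwp : Summable fun i => w i * p i)
    (hwβ : Summable fun i => (w i)⁻¹ ^ β) :
    (Summable fun i => p i ^ α) ∧
      renyiEntropy α p ≤ log ((∑' i, w i * p i) ^ β * ∑' i, (w i)⁻¹ ^ β) := by
  obtain ⟨i, hi⟩ := hp_pos
  have hβ : 0 < β := h.symm.pos
  have hα : α = β / (β + 1) := by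
    have := h.inv_eq
    rw [← inv_inv α, this]
    field_simp
  have h1α : 1 - α = 1 / (β + 1) := by
    rw [hα]
    field_simp
    ring
  obtain ⟨hpα, hle⟩ := summable_rpow_and_tsum_rpow_le h hp hw hwp hwβ
  have hsum_pos : 0 < ∑' j, p j ^ α :=
    hpα.tsum_pos (fun j => rpow_nonneg (hp j) α) i (rpow_pos_of_pos hi α)
  have hmoment_pos : 0 < ∑' j, w j * p j :=
    hwp.tsum_pos (fun j => mul_nonneg (hw j).le (hp j)) i (mul_pos (hw i) hi)
  have hweight_pos : 0 < ∑' j, (w j)⁻¹ ^ β :=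
    hwβ.tsum_pos (fun j => rpow_nonneg (inv_pos.2 (hw j)).le β) i
      (rpow_pos_of_pos (inv_pos.2 (hw i)) β)
  refine ⟨hpα, ?_⟩
  calc renyiEntropy α p
      ≤ 1 / (1 - α) * log ((∑' i, w i * p i) ^ α * (∑' i, (w i)⁻¹ ^ β) ^ (α / β)) := by
        have : 0 ≤ 1 / (1 - α) := by
          rw [h1α]
          positivity
        exact mul_le_mul_of_nonneg_left (log_le_log hsum_pos hle) this
    _ = β * log (∑' i, w i * p i) + log (∑' i, (w i)⁻¹ ^ β) := by
        rw [log_mul (by positivity) (by positivity), log_rpow hmoment_pos, log_rpow hweight_pos,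
          h1α, hα]
        field_simp
    _ = log ((∑' i, w i * p i) ^ β * ∑' i, (w i)⁻¹ ^ β) := by
        rw [log_mul (by positivity) hweight_pos.ne', log_rpow hmoment_pos]

end RenyiEntropy

section LatticeSum

open UpperHalfPlane hiding I
open Complex (I normSq)

local notation "𝕢" => Function.Periodic.qParam 1

/-- The sum `∑ |z + k| ^ (-2m)` over the integer translates of a point `z = x + i s` of the upper
half-plane, that is, the sum of the `m`-th power of the Cauchy kernel `1 / ((k + x)² + s²)`. -/
noncomputable def latticeSum (m : ℕ) (z : ℍ) : ℝ :=
  ∑' k : ℤ, (normSq (z + k))⁻¹ ^ m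

lemma normSq_add_intCast (z : ℍ) (k : ℤ) : normSq (z + k) = ((k : ℝ) + z.re) ^ 2 + z.im ^ 2 := by
  simp only [Complex.normSq_apply, Complex.add_re, Complex.add_im, coe_re, coe_im,
    Complex.intCast_re, Complex.intCast_im, add_zero]
  ring

lemma normSq_add_intCast_pos (z : ℍ) (k : ℤ) : 0 < normSq (z + k) := by
  have := z.im_pos
  rw [normSq_add_intCast]
  positivity

lemma summable_inv_normSq_add_intCast_pow (z : ℍ) {m : ℕ} (hm : m ≠ 0) :
    Summable fun k : ℤ => (normSq (z + k))⁻¹ ^ m := by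
  refine (EisensteinSeries.linear_right_summable (z : ℂ) 1
    (k := ((2 * m : ℕ) : ℤ)) (by omega)).norm.congr fun k => ?_
  rw [norm_inv, zpow_natCast, norm_pow, pow_mul, ← Complex.normSq_eq_norm_sq, inv_pow,
    Int.cast_one, one_mul]

lemma latticeSum_pos {m : ℕ} (hm : m ≠ 0) (z : ℍ) : 0 < latticeSum m z :=
  (summable_inv_normSq_add_intCast_pow z hm).tsum_pos
    (fun _ => pow_nonneg (inv_nonneg.2 (Complex.normSq_nonneg _)) m) 0
    (pow_pos (inv_pos.2 (normSq_add_intCast_pos z 0)) m)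

lemma im_inv_add_intCast (z : ℍ) (k : ℤ) :
    ((z + k : ℂ)⁻¹).im = -z.im * (normSq (z + k))⁻¹ := by
  simp [Complex.inv_im, div_eq_mul_inv]

lemma re_inv_add_intCast_sq (z : ℍ) (k : ℤ) :
    (((z + k : ℂ) ^ 2)⁻¹).re = (normSq (z + k))⁻¹ - 2 * z.im ^ 2 * (normSq (z + k))⁻¹ ^ 2 := by
  have hpos := normSq_add_intCast_pos z k
  have hre : ((z + k : ℂ) ^ 2).re = normSq (z + k) - 2 * z.im ^ 2 := by
    simp only [Complex.normSq_apply, pow_two, Complex.mul_re, Complex.add_re, Complex.add_im,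
      coe_re, coe_im, Complex.intCast_re, Complex.intCast_im, add_zero]
    ring
  rw [Complex.inv_re, map_pow, hre]
  field_simp

lemma tsum_im_inv_add_intCast (z : ℍ) :
    ∑' k : ℤ, ((z + k : ℂ)⁻¹).im = (π * Complex.cot (π * z)).im := by
  have hz := coe_mem_integerComplement z
  set f : ℤ → ℝ := fun k => ((z + k : ℂ)⁻¹).im with hf
  have hsum : Summable f := by
    simp only [hf, im_inv_add_intCast]
    simpa only [pow_one] using
      (summable_inv_normSq_add_intCast_pow z one_ne_zero).mul_left (-z.im)
  have hsum_pos : Summable fun n : ℕ => f (n + 1) :=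
    hsum.comp_injective (i := fun n : ℕ => (n : ℤ) + 1) fun a b h => by simpa using h
  have hsum_neg : Summable fun n : ℕ => f (-(n + 1)) :=
    hsum.comp_injective (i := fun n : ℕ => -((n : ℤ) + 1)) fun a b h => by simpa using h
  -- The series `∑ (z + k)⁻¹` itself converges only after pairing `k` with `-k`.
  calc ∑' k, f k
      = f 0 + ∑' n : ℕ, (f (-(n + 1)) + f (n + 1)) := by
        rw [tsum_of_add_one_of_neg_add_one hsum_pos hsum_neg, hsum_neg.tsum_add hsum_pos]
        ring
    _ = (1 / (z : ℂ)).im + ∑' n : ℕ, (1 / ((z : ℂ) - (n + 1)) + 1 / ((z : ℂ) + (n + 1))).im := by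
        simp [hf, ← sub_eq_add_neg, -neg_add_rev, -Complex.inv_im]
    _ = (π * Complex.cot (π * z)).im := by
        rw [← Complex.im_tsum (summable_cotTerm hz), ← Complex.add_im, ← cot_series_rep' hz,
          add_sub_cancel]

lemma latticeSum_one (z : ℍ) : latticeSum 1 z = π / z.im * ((1 + 𝕢 z) / (1 - 𝕢 z)).re := by
  have hcot : (π : ℂ) * Complex.cot (π * z) = -I * (π * ((1 + 𝕢 z) / (1 - 𝕢 z))) := by
    rw [Complex.cot_pi_eq_exp_ratio, Function.Periodic.qParam, Complex.ofReal_one, div_one,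
      div_mul_eq_div_div, div_right_comm, Complex.div_I]
    ring
  have him : (-I * (π * ((1 + 𝕢 z) / (1 - 𝕢 z)))).im = -(π * ((1 + 𝕢 z) / (1 - 𝕢 z)).re) := by
    rw [neg_mul, Complex.neg_im, Complex.I_mul_im, Complex.re_ofReal_mul]
  have h := tsum_im_inv_add_intCast z
  simp only [im_inv_add_intCast, tsum_mul_left, hcot, him] at h
  simp only [latticeSum, pow_one]
  rw [div_mul_eq_mul_div, eq_div_iff z.im_ne_zero]
  linarith

lemma tsum_inv_add_intCast_sq (z : ℍ) :
    ∑' k : ℤ, ((z + k : ℂ) ^ 2)⁻¹ = -(4 * π ^ 2) * (𝕢 z / (1 - 𝕢 z) ^ 2) := by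
  have hlip := EisensteinSeries.qExpansion_identity le_rfl z
  simp only [pow_one] at hlip
  rw [tsum_coe_mul_geometric_of_norm_lt_one (norm_exp_two_pi_I_lt_one z)] at hlip
  simp only [Function.Periodic.qParam, Complex.ofReal_one, div_one]
  rw [pow_two (-2 * π * I)] at hlip
  convert hlip using 2
  · simp only [Nat.reduceAdd, one_div]
  · simp only [neg_mul, mul_neg, neg_neg, Nat.factorial_one, Nat.cast_one, div_one]
    linear_combination -(4 * π ^ 2 : ℂ) * Complex.I_mul_I

lemma latticeSum_two (z : ℍ) :
    latticeSum 2 z = π / (2 * z.im ^ 3) *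
      (((1 + 𝕢 z) / (1 - 𝕢 z)).re + 4 * π * z.im * (𝕢 z / (1 - 𝕢 z) ^ 2).re) := by
  have hsum_one : Summable fun k : ℤ => (normSq (z + k))⁻¹ := by
    simpa only [pow_one] using summable_inv_normSq_add_intCast_pow z one_ne_zero
  have hsum_two := summable_inv_normSq_add_intCast_pow z two_ne_zero
  have hsum : Summable fun k : ℤ => ((z + k : ℂ) ^ 2)⁻¹ := by
    simpa using EisensteinSeries.linear_right_summable (z : ℂ) 1 (k := 2) le_rfl
  have hre : latticeSum 1 z - 2 * z.im ^ 2 * latticeSum 2 z =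
      -(4 * π ^ 2) * (𝕢 z / (1 - 𝕢 z) ^ 2).re := by
    calc latticeSum 1 z - 2 * z.im ^ 2 * latticeSum 2 z
        = ∑' k : ℤ, (((z + k : ℂ) ^ 2)⁻¹).re := by
          simp only [re_inv_add_intCast_sq, latticeSum, pow_one]
          rw [hsum_one.tsum_sub (hsum_two.mul_left _), tsum_mul_left]
      _ = (((-(4 * π ^ 2) : ℝ) : ℂ) * (𝕢 z / (1 - 𝕢 z) ^ 2)).re := by
          rw [← Complex.re_tsum hsum, tsum_inv_add_intCast_sq]
          push_cast
          rfl
      _ = _ := Complex.re_ofReal_mul _ _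
  have := z.im_ne_zero
  rw [latticeSum_one] at hre
  field_simp at hre ⊢
  linarith

lemma re_one_add_div_one_sub_le {q : ℂ} (hq : ‖q‖ < 1) :
    ((1 + q) / (1 - q)).re ≤ (1 + ‖q‖) / (1 - ‖q‖) := by
  simpa using re_herglotzRieszKernel_le (c := 0) (z := 1) (w := q) (R := 1)
    (by simp) (by simpa using hq)

lemma re_div_one_sub_sq_le {q : ℂ} (hq : ‖q‖ < 1) :
    (q / (1 - q) ^ 2).re ≤ ‖q‖ / (1 - ‖q‖) ^ 2 := by
  have hsub : 1 - ‖q‖ ≤ ‖1 - q‖ := by simpa using norm_sub_norm_le 1 q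
  have : 0 < 1 - ‖q‖ := sub_pos.2 hq
  calc (q / (1 - q) ^ 2).re ≤ ‖q / (1 - q) ^ 2‖ := Complex.re_le_norm _
    _ = ‖q‖ / ‖1 - q‖ ^ 2 := by rw [norm_div, norm_pow]
    _ ≤ ‖q‖ / (1 - ‖q‖) ^ 2 := by gcongr

lemma norm_qParam_one (z : ℍ) : ‖𝕢 z‖ = (exp (2 * π * z.im))⁻¹ := by
  rw [Function.Periodic.norm_qParam, ← exp_neg]
  simp

lemma re_one_add_div_one_sub_qParam_le (z : ℍ) :
    ((1 + 𝕢 z) / (1 - 𝕢 z)).re ≤ 1 + 2 / (exp (2 * π * z.im) - 1) := by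
  have hE : 1 < exp (2 * π * z.im) := one_lt_exp_iff.2 (by have := z.im_pos; positivity)
  have hq : ‖𝕢 z‖ < 1 := by simpa only [norm_qParam_one] using inv_lt_one_of_one_lt₀ hE
  refine (re_one_add_div_one_sub_le hq).trans_eq ?_
  have : exp (2 * π * z.im) - 1 ≠ 0 := (sub_pos.2 hE).ne'
  rw [norm_qParam_one]
  field_simp
  ring

lemma re_qParam_div_one_sub_sq_le (z : ℍ) :
    (𝕢 z / (1 - 𝕢 z) ^ 2).re ≤ exp (2 * π * z.im) / (exp (2 * π * z.im) - 1) ^ 2 := by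
  have hE : 1 < exp (2 * π * z.im) := one_lt_exp_iff.2 (by have := z.im_pos; positivity)
  have hq : ‖𝕢 z‖ < 1 := by simpa only [norm_qParam_one] using inv_lt_one_of_one_lt₀ hE
  refine (re_div_one_sub_sq_le hq).trans_eq ?_
  have : exp (2 * π * z.im) - 1 ≠ 0 := (sub_pos.2 hE).ne'
  rw [norm_qParam_one]
  field_simp

lemma latticeSum_one_le (z : ℍ) :
    latticeSum 1 z ≤ π / z.im * (1 + 2 / (exp (2 * π * z.im) - 1)) := by
  have := z.im_pos
  rw [latticeSum_one]
  gcongr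
  exact re_one_add_div_one_sub_qParam_le z

lemma mul_exp_div_exp_sub_one_sq_le {u : ℝ} (hu : 0 < u) :
    u * exp u / (exp u - 1) ^ 2 ≤ (1 + u) / (exp u - 1) := by
  have hle := add_one_le_exp u
  rw [div_le_div_iff₀ (by nlinarith) (by linarith)]
  nlinarith [mul_nonneg (by linarith : 0 ≤ exp u - 1) (by linarith : 0 ≤ exp u - 1 - u)]

lemma latticeSum_two_le (z : ℍ) :
    latticeSum 2 z ≤
      π / (2 * z.im ^ 3) * (1 + 4 * (1 + π * z.im) / (exp (2 * π * z.im) - 1)) := by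
  have := z.im_pos
  set u := 2 * π * z.im with hu
  have hu_pos : 0 < u := by positivity
  rw [latticeSum_two]
  refine mul_le_mul_of_nonneg_left ?_ (by positivity)
  calc ((1 + 𝕢 z) / (1 - 𝕢 z)).re + 4 * π * z.im * (𝕢 z / (1 - 𝕢 z) ^ 2).re
      ≤ 1 + 2 / (exp u - 1) + 4 * π * z.im * (exp u / (exp u - 1) ^ 2) := by
        gcongr
        · exact re_one_add_div_one_sub_qParam_le z
        · exact re_qParam_div_one_sub_sq_le z
    _ = 1 + 2 / (exp u - 1) + 2 * (u * exp u / (exp u - 1) ^ 2) := by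
        rw [hu]
        ring
    _ ≤ 1 + 2 / (exp u - 1) + 2 * ((1 + u) / (exp u - 1)) := by
        gcongr _ + 2 * ?_
        exact mul_exp_div_exp_sub_one_sq_le hu_pos
    _ = 1 + 4 * (1 + π * z.im) / (exp u - 1) := by
        rw [hu]
        ring

end LatticeSum

lemma antitoneOn_div_exp_sub_one : AntitoneOn (fun x : ℝ => x / (exp x - 1)) (Set.Ioi 0) := by
  intro x (hx : 0 < x) y (hy : 0 < y) hxy
  have hslope := convexOn_exp.secant_mono (Set.mem_univ 0) (Set.mem_univ x) (Set.mem_univ y)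
    hx.ne' hy.ne' hxy
  simp only [exp_zero, sub_zero] at hslope
  have hslope_pos : 0 < (exp x - 1) / x := div_pos (sub_pos.2 (one_lt_exp_iff.2 hx)) hx
  simpa only [inv_div] using inv_anti₀ hslope_pos hslope

lemma antitoneOn_mul_one_add_div_exp_sub_one :
    AntitoneOn (fun s : ℝ => 4 * (1 + π * s) / (exp (2 * π * s) - 1)) (Set.Ioi 0) := by
  intro s (hs : 0 < s) t (ht : 0 < t) hst
  have hE : 0 < exp (2 * π * s) - 1 := sub_pos.2 (one_lt_exp_iff.2 (by positivity))
  have hle : 2 * π * s ≤ 2 * π * t := by gcongr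
  have hanti := antitoneOn_div_exp_sub_one (Set.mem_Ioi.2 (by positivity))
    (Set.mem_Ioi.2 (by positivity)) hle
  have hsplit : ∀ x, 4 * (1 + π * x) / (exp (2 * π * x) - 1) =
      4 / (exp (2 * π * x) - 1) + 2 * (2 * π * x / (exp (2 * π * x) - 1)) := fun x => by ring
  simp only [hsplit]
  gcongr

lemma log_mul_one_add_lt {a x : ℝ} (ha : 0 < a) (hx : 0 < x) :
    log (a * (1 + x)) < log a + x := by
  rw [log_mul ha.ne' (by positivity)]
  linarith [log_lt_sub_one_of_pos (by positivity : 0 < 1 + x) (by linarith)]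

section IntegerValued

open UpperHalfPlane

variable {p : ℤ → ℝ}

lemma summable_rpow_and_renyiEntropy_le_log_latticeSum (hp0 : ∀ k, 0 ≤ p k) (hp1 : HasSum p 1)
    (z : ℍ) {v : ℝ} (hv : HasSum (fun k : ℤ => ((k : ℝ) + z.re) ^ 2 * p k) v) {m : ℕ} {α : ℝ}
    (h : HolderTriple 1 m α) :
    (Summable fun k => p k ^ α) ∧
      renyiEntropy α p ≤ log ((v + z.im ^ 2) ^ m * latticeSum m z) := by
  have hm : m ≠ 0 := Nat.cast_ne_zero.1 h.symm.ne_zero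
  have hp_pos : ∃ k, 0 < p k := by
    by_contra! hle
    exact one_ne_zero (hp1.unique (funext (fun k => (hle k).antisymm (hp0 k)) ▸ hasSum_zero))
  have hmoment : HasSum (fun k : ℤ => Complex.normSq (z + k) * p k) (v + z.im ^ 2) := by
    simpa only [normSq_add_intCast, add_mul, mul_one] using hv.add (hp1.mul_left (z.im ^ 2))
  have hle := summable_rpow_and_renyiEntropy_le_log h hp0 hp_pos (normSq_add_intCast_pos z)
    hmoment.summable (by simpa only [rpow_natCast] using summable_inv_normSq_add_intCast_pow z hm)
  simpa only [hmoment.tsum_eq, rpow_natCast, latticeSum] using hle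

lemma summable_rpow_half_and_renyiEntropy_half_lt (hp0 : ∀ k, 0 ≤ p k) (hp1 : HasSum p 1)
    {c σ : ℝ} (hσ : 0 < σ) (hv : HasSum (fun k : ℤ => ((k : ℝ) - c) ^ 2 * p k) (σ ^ 2)) :
    (Summable fun k => p k ^ (1 / 2 : ℝ)) ∧
      renyiEntropy (1 / 2) p < log (2 * π * σ) + 2 / (exp (2 * π * σ) - 1) := by
  have hE : 0 < exp (2 * π * σ) - 1 := sub_pos.2 (one_lt_exp_iff.2 (by positivity))
  have hexponents : HolderTriple 1 (1 : ℕ) (1 / 2) := ⟨by norm_num, by norm_num, by norm_num⟩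
  set z : ℍ := ⟨⟨-c, σ⟩, hσ⟩
  have hpos : 0 < latticeSum 1 z := latticeSum_pos one_ne_zero z
  obtain ⟨hsum, hle⟩ := summable_rpow_and_renyiEntropy_le_log_latticeSum hp0 hp1 z hv hexponents
  have hbound : (σ ^ 2 + σ ^ 2) ^ 1 * latticeSum 1 z ≤
      2 * π * σ * (1 + 2 / (exp (2 * π * σ) - 1)) := by
    calc (σ ^ 2 + σ ^ 2) ^ 1 * latticeSum 1 z
        ≤ (σ ^ 2 + σ ^ 2) ^ 1 * (π / σ * (1 + 2 / (exp (2 * π * σ) - 1))) := by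
          gcongr
          exact latticeSum_one_le z
      _ = 2 * π * σ * (1 + 2 / (exp (2 * π * σ) - 1)) := by
          field_simp
          ring
  exact ⟨hsum, (hle.trans (log_le_log (by positivity) hbound)).trans_lt
    (log_mul_one_add_lt (by positivity) (by positivity))⟩

lemma summable_rpow_two_thirds_and_renyiEntropy_two_thirds_lt (hp0 : ∀ k, 0 ≤ p k)
    (hp1 : HasSum p 1) {c σ : ℝ} (hσ : 0 < σ)
    (hv : HasSum (fun k : ℤ => ((k : ℝ) - c) ^ 2 * p k) (σ ^ 2)) :
    (Summable fun k => p k ^ (2 / 3 : ℝ)) ∧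
      renyiEntropy (2 / 3) p <
        log (8 * π * σ / (3 * √3)) + 4 * (1 + π * σ) / (exp (2 * π * σ) - 1) := by
  have hE : 0 < exp (2 * π * σ) - 1 := sub_pos.2 (one_lt_exp_iff.2 (by positivity))
  have hexponents : HolderTriple 1 (2 : ℕ) (2 / 3) := ⟨by norm_num, by norm_num, by norm_num⟩
  set s := √3 * σ with hs
  have hs_pos : 0 < s := by positivity
  have hσs : σ ≤ s := le_mul_of_one_le_left hσ.le (one_le_sqrt.2 (by norm_num))
  set z : ℍ := ⟨⟨-c, s⟩, hs_pos⟩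
  have hpos : 0 < latticeSum 2 z := latticeSum_pos two_ne_zero z
  obtain ⟨hsum, hle⟩ := summable_rpow_and_renyiEntropy_le_log_latticeSum hp0 hp1 z hv hexponents
  have hleading : (σ ^ 2 + s ^ 2) ^ 2 * (π / (2 * s ^ 3)) = 8 * π * σ / (3 * √3) := by
    have h3 : √3 ^ 2 = (3 : ℝ) := sq_sqrt (by norm_num)
    rw [hs, mul_pow, mul_pow, h3, pow_succ √3 2, h3]
    field_simp
    ring
  have hbound : (σ ^ 2 + s ^ 2) ^ 2 * latticeSum 2 z ≤
      8 * π * σ / (3 * √3) * (1 + 4 * (1 + π * σ) / (exp (2 * π * σ) - 1)) := by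
    rw [← hleading, mul_assoc]
    gcongr
    refine (latticeSum_two_le z).trans (mul_le_mul_of_nonneg_left ?_ (by positivity))
    exact add_le_add_right (antitoneOn_mul_one_add_div_exp_sub_one hσ hs_pos hσs) 1
  exact ⟨hsum, (hle.trans (log_le_log (by positivity) hbound)).trans_lt
    (log_mul_one_add_lt (by positivity) (by positivity))⟩

theorem improved_massey_renyi_half_twothirds_general (hp0 : ∀ k, 0 ≤ p k) (hp1 : HasSum p 1)
    {c σ : ℝ} (hσ : 0 < σ) (hv : HasSum (fun k : ℤ => ((k : ℝ) - c) ^ 2 * p k) (σ ^ 2)) :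
    ((Summable fun k => p k ^ (1 / 2 : ℝ)) ∧
      renyiEntropy (1 / 2) p < log (2 * π * σ) + 2 / (exp (2 * π * σ) - 1)) ∧
    (Summable fun k => p k ^ (2 / 3 : ℝ)) ∧
      renyiEntropy (2 / 3) p <
        log (8 * π * σ / (3 * √3)) + 4 * (1 + π * σ) / (exp (2 * π * σ) - 1) :=
  ⟨summable_rpow_half_and_renyiEntropy_half_lt hp0 hp1 hσ hv,
    summable_rpow_two_thirds_and_renyiEntropy_two_thirds_lt hp0 hp1 hσ hv⟩

end IntegerValued

/-- Improved Massey-type inequalities for Rényi entropies of orders `1/2` and `2/3`: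
if `X` is integer-valued with finite variance `σ² > 0` and finite Rényi entropies of
orders `1/2` and `2/3`, then `H_{1/2}(X) < ln(2πσ) + 2/(e^{2πσ} - 1)` and
`H_{2/3}(X) < ln(8πσ/(3√3)) + 4(1 + πσ)/(e^{2πσ} - 1)`, where `σ = √σ²`. -/
theorem improved_massey_renyi_half_twothirds
    (p : ℤ → ℝ) (hp0 : ∀ k, 0 ≤ p k) (hp1 : ∑' k, p k = 1)
    (μ : ℝ) (hμ : μ = ∑' k : ℤ, (k : ℝ) * p k)
    (hμs : Summable (fun k : ℤ => (k : ℝ) * p k))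
    (σ2 : ℝ) (hσ2 : σ2 = ∑' k : ℤ, ((k : ℝ) - μ) ^ 2 * p k)
    (hσ2s : Summable (fun k : ℤ => ((k : ℝ) - μ) ^ 2 * p k)) (hσ2pos : 0 < σ2)
    (hhalf : Summable (fun k : ℤ => p k ^ ((1 : ℝ) / 2)))
    (htwothirds : Summable (fun k : ℤ => p k ^ ((2 : ℝ) / 3))) :
    (1 / (1 - (1 : ℝ) / 2)) * Real.log (∑' k : ℤ, p k ^ ((1 : ℝ) / 2)) <
      Real.log (2 * π * Real.sqrt σ2) + 2 / (Real.exp (2 * π * Real.sqrt σ2) - 1) ∧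
    (1 / (1 - (2 : ℝ) / 3)) * Real.log (∑' k : ℤ, p k ^ ((2 : ℝ) / 3)) <
      Real.log (8 * π * Real.sqrt σ2 / (3 * Real.sqrt 3))
        + 4 * (1 + π * Real.sqrt σ2) / (Real.exp (2 * π * Real.sqrt σ2) - 1) := by
  have hp : HasSum p 1 := by
    have hs : Summable p := by
      by_contra h
      exact zero_ne_one ((tsum_eq_zero_of_not_summable h).symm.trans hp1)
    exact hp1 ▸ hs.hasSum
  have hv : HasSum (fun k : ℤ => ((k : ℝ) - μ) ^ 2 * p k) (√σ2 ^ 2) := by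
    rw [sq_sqrt hσ2pos.le, hσ2]
    exact hσ2s.hasSum
  obtain ⟨⟨_, half_lt⟩, _, two_thirds_lt⟩ :=
    improved_massey_renyi_half_twothirds_general hp0 hp (sqrt_pos.2 hσ2pos) hv
  exact ⟨half_lt, two_thirds_lt⟩
end

section
/- Improved Massey inequality for guessing: let X be a discrete random variable taking countably many values with finite guessing entropy G(X). Then G(X) > e^{H(X)}/e + 1/2 = e^{H(X)−1} + 1/2. -/
/-!
The entropy of `p` is at most its cross entropy against the geometric law `n ↦ (1 - r) * r ^ n`,
which depends on `p` only through its mean `M = G - 1`. With `r = exp (-t)` the cross entropy is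
`M * t - log (1 - exp (-t))`, and `x < sinh x` at `x = t / 2` shows that this is less than
`(M + 1 / 2) * t - log t`. The last expression is smallest at `t = 1 / (M + 1 / 2)`, where it equals
`1 + log (M + 1 / 2) = 1 + log (G - 1 / 2)`.
-/

open MeasureTheory Real

section Gibbs

lemma negMulLog_le_sub_mul_log {a b : ℝ} (ha : 0 ≤ a) (hb : 0 ≤ b) (hab : b = 0 → a = 0) :
    negMulLog a ≤ b - a - a * log b := by
  rcases hb.eq_or_lt with rfl | hb
  · simp [hab rfl]
  have hcross : a / b * negMulLog b = -(a * log b) := by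
    rw [negMulLog]
    field_simp
  calc negMulLog a = negMulLog (a / b * b) := by rw [div_mul_cancel₀ a hb.ne']
    _ = b * negMulLog (a / b) - a * log b := by
        rw [negMulLog_mul, hcross, sub_eq_add_neg]
    _ ≤ b * (1 - a / b) - a * log b := by
        gcongr
        exact negMulLog_le_one_sub_self (div_nonneg ha hb.le)
    _ = b - a - a * log b := by field_simp

variable {ι : Type*} {p q : ι → ℝ}

lemma summable_negMulLog (hp0 : ∀ i, 0 ≤ p i) (hq0 : ∀ i, 0 ≤ q i) (hpq : ∀ i, q i = 0 → p i = 0)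
    (hp : Summable p) (hq : Summable q) (hcross : Summable fun i ↦ p i * log (q i)) :
    Summable fun i ↦ negMulLog (p i) := by
  refine ((hq.sub hp).sub hcross).of_norm_bounded_eventually ?_
  filter_upwards [hp.tendsto_cofinite_zero.eventually_le_const one_pos] with i hi
  rw [norm_of_nonneg (negMulLog_nonneg (hp0 i) hi)]
  exact negMulLog_le_sub_mul_log (hp0 i) (hq0 i) (hpq i)

theorem tsum_negMulLog_le_neg_tsum_mul_log (hp0 : ∀ i, 0 ≤ p i) (hq0 : ∀ i, 0 ≤ q i)
    (hpq : ∀ i, q i = 0 → p i = 0) (hp : Summable p) (hq : Summable q)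
    (hle : ∑' i, q i ≤ ∑' i, p i) (hcross : Summable fun i ↦ p i * log (q i)) :
    ∑' i, negMulLog (p i) ≤ -∑' i, p i * log (q i) := by
  have hgibbs : ∑' i, negMulLog (p i) ≤ ∑' i, q i - ∑' i, p i - ∑' i, p i * log (q i) :=
    hasSum_le (fun i ↦ negMulLog_le_sub_mul_log (hp0 i) (hq0 i) (hpq i))
      (summable_negMulLog hp0 hq0 hpq hp hq hcross).hasSum
      ((hq.hasSum.sub hp.hasSum).sub hcross.hasSum)
  linarith

end Gibbs

lemma mul_exp_neg_half_lt_one_sub_exp_neg {t : ℝ} (ht : 0 < t) :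
    t * exp (-(t / 2)) < 1 - exp (-t) := by
  have hsinh : t < 2 * sinh (t / 2) := by linarith [self_lt_sinh_iff.2 (half_pos ht)]
  calc t * exp (-(t / 2)) < 2 * sinh (t / 2) * exp (-(t / 2)) := by gcongr
    _ = exp (t / 2 + -(t / 2)) - exp (-(t / 2) + -(t / 2)) := by
        rw [sinh_eq, exp_add, exp_add]
        ring
    _ = 1 - exp (-t) := by rw [add_neg_cancel, exp_zero]; ring_nf

lemma log_sub_half_lt_log_one_sub_exp_neg {t : ℝ} (ht : 0 < t) :
    log t - t / 2 < log (1 - exp (-t)) := by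
  calc log t - t / 2 = log (t * exp (-(t / 2))) := by
        rw [log_mul ht.ne' (exp_ne_zero _), log_exp, sub_eq_add_neg]
    _ < log (1 - exp (-t)) := log_lt_log (by positivity) (mul_exp_neg_half_lt_one_sub_exp_neg ht)

section Mean

variable {p : ℕ → ℝ} {M : ℝ}

lemma tsum_negMulLog_le_geometric (hp0 : ∀ n, 0 ≤ p n) (hp : HasSum p 1)
    (hM : HasSum (fun n : ℕ ↦ n * p n) M) {r : ℝ} (hr0 : 0 < r) (hr1 : r < 1) :
    ∑' n, negMulLog (p n) ≤ -(log (1 - r) + M * log r) := by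
  have hr : 0 < 1 - r := sub_pos.2 hr1
  have hq : HasSum (fun n : ℕ ↦ (1 - r) * r ^ n) 1 := by
    simpa only [mul_inv_cancel₀ hr.ne'] using
      (hasSum_geometric_of_lt_one hr0.le hr1).mul_left (1 - r)
  have hq0 (n : ℕ) : 0 < (1 - r) * r ^ n := by positivity
  have hlog (n : ℕ) : p n * log ((1 - r) * r ^ n) = p n * log (1 - r) + n * p n * log r := by
    rw [log_mul hr.ne' (pow_pos hr0 n).ne', log_pow]
    ring
  have hcross : HasSum (fun n ↦ p n * log ((1 - r) * r ^ n)) (log (1 - r) + M * log r) := by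
    simpa only [hlog, one_mul] using (hp.mul_right (log (1 - r))).add (hM.mul_right (log r))
  rw [← hcross.tsum_eq]
  exact tsum_negMulLog_le_neg_tsum_mul_log hp0 (fun n ↦ (hq0 n).le)
    (fun n hn ↦ absurd hn (hq0 n).ne') hp.summable hq.summable
    (hq.tsum_eq.trans hp.tsum_eq.symm).le hcross.summable

lemma tsum_negMulLog_lt_mul_sub_log (hp0 : ∀ n, 0 ≤ p n) (hp : HasSum p 1)
    (hM : HasSum (fun n : ℕ ↦ n * p n) M) {t : ℝ} (ht : 0 < t) :
    ∑' n, negMulLog (p n) < (M + 1 / 2) * t - log t := by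
  have hgeom := tsum_negMulLog_le_geometric hp0 hp hM (exp_pos (-t))
    (exp_lt_one_iff.2 (neg_neg_of_pos ht))
  rw [log_exp] at hgeom
  linarith [log_sub_half_lt_log_one_sub_exp_neg ht]

theorem tsum_negMulLog_lt_one_add_log_mean (hp0 : ∀ n, 0 ≤ p n) (hp : HasSum p 1)
    (hM : HasSum (fun n : ℕ ↦ n * p n) M) :
    ∑' n, negMulLog (p n) < 1 + log (M + 1 / 2) := by
  have hM0 : 0 ≤ M := hM.nonneg fun n ↦ mul_nonneg n.cast_nonneg (hp0 n)
  have hpos : 0 < M + 1 / 2 := by positivity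
  simpa only [mul_inv_cancel₀ hpos.ne', log_inv, sub_neg_eq_add] using
    tsum_negMulLog_lt_mul_sub_log hp0 hp hM (inv_pos.2 hpos)

end Mean

theorem improved_massey_guessing_general {p : ℕ → ℝ} (hp0 : ∀ n, 0 ≤ p n) (hp : HasSum p 1)
    {G : ℝ} (hG : HasSum (fun n : ℕ ↦ ((n : ℝ) + 1) * p n) G) :
    exp ((∑' n, p n * log (1 / p n)) - 1) + 1 / 2 < G := by
  have hM : HasSum (fun n : ℕ ↦ n * p n) (G - 1) := by
    simpa only [add_one_mul, add_sub_cancel_right] using hG.sub hp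
  have hM0 : 0 ≤ G - 1 := hM.nonneg fun n ↦ mul_nonneg n.cast_nonneg (hp0 n)
  have hH : ∑' n, p n * log (1 / p n) < 1 + log (G - 1 / 2) := by
    convert tsum_negMulLog_lt_one_add_log_mean hp0 hp hM using 3
    · rw [one_div, log_inv, negMulLog, mul_neg, neg_mul]
    · ring
  have hexp : exp ((∑' n, p n * log (1 / p n)) - 1) < G - 1 / 2 :=
    (lt_log_iff_exp_lt (by linarith)).1 (by linarith)
  linarith

/-- Improved Massey inequality for guessing: if `X` is a discrete random variable whose
probabilities arranged in nonincreasing order are `p 0 ≥ p 1 ≥ ⋯`, with finite guessing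
entropy `G(X) = Σ_{k≥1} k·p_(k)`, then `G(X) > e^{H(X)}/e + 1/2 = e^{H(X)-1} + 1/2`. -/
theorem improved_massey_guessing
    (p : ℕ → ℝ) (hp0 : ∀ n, 0 ≤ p n) (hmono : Antitone p) (hp1 : ∑' n, p n = 1)
    (G : ℝ) (hG : G = ∑' n : ℕ, ((n : ℝ) + 1) * p n)
    (hGs : Summable (fun n : ℕ => ((n : ℝ) + 1) * p n)) :
    G > Real.exp ((∑' n, p n * Real.log (1 / p n)) - 1) + 1 / 2 := by
  have hp : Summable p := not_imp_comm.1 tsum_eq_zero_of_not_summable (by simp [hp1])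
  exact improved_massey_guessing_general hp0 (hp1 ▸ hp.hasSum) (hG ▸ hGs.hasSum)
end
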